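/- arXiv:1001.3351 — 3 statements merged into one kernel-verified Lean document; each statement's English description precedes it below -/
import Mathlib

section
/- Let n ≥ 2 and let c₁, c₂ ∈ ℝ. Consider the two curve-germs in ℝ^{2n} (coordinates (p₁,q₁,p₂,q₂,…,pₙ,qₙ), all unlisted coordinates equal to 0): B₁(t) = (t³, −t², 0, −c₁t², 0, …, 0) and B₂(t) = (t³, 0, −t², c₂t⁵, 0, …, 0) (the class (T₇)¹). Then: Lt(B₁) = 3; Lt(B₂) = 5 if c₂ ≠ 0 and Lt(B₂) = ∞ if c₂ = 0; and Lt(B₁,B₂) = 2 if c₁ ≠ 0 while Lt(B₁,B₂) = 3 if c₁ = 0. -/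
noncomputable section

/-- The order of vanishing at `0` of a function `h : ℝ → ℝ`: the least `k ≥ 1` such that
the `k`-th derivative of `h` at `0` is nonzero, and `∞` if all derivatives vanish at `0`. -/
def vanishOrder (h : ℝ → ℝ) : ℕ∞ :=
  sInf {k : ℕ∞ | ∃ m : ℕ, k = m ∧ 1 ≤ m ∧ iteratedDeriv m h 0 ≠ 0}

/-- The standard symplectic form `ω = ∑ dpᵢ ∧ dqᵢ` on `ℝ^{2n}`, where the coordinates are
ordered as `(p₁, q₁, …, pₙ, qₙ)` (so `pᵢ` has index `2(i-1)` and `qᵢ` has index `2(i-1)+1`). -/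
def stdSymp (n : ℕ) (u v : Fin (2 * n) → ℝ) : ℝ :=
  ∑ i : Fin n,
    (u ⟨2 * i.val, by have := i.isLt; omega⟩ * v ⟨2 * i.val + 1, by have := i.isLt; omega⟩ -
     u ⟨2 * i.val + 1, by have := i.isLt; omega⟩ * v ⟨2 * i.val, by have := i.isLt; omega⟩)

/-- A germ at `0` of a smooth Lagrangian submanifold of `(ℝ^{2n}, ω)`, given by `n` smooth
functions `H₁, …, Hₙ` vanishing at `0`, whose differentials are linearly independent at the
points of `{H₁ = ⋯ = Hₙ = 0}` near `0`, and such that `ω` vanishes on `ker DH(x)` at every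
such point. -/
structure LagrangianGerm (n : ℕ) : Type where
  H : Fin n → (Fin (2 * n) → ℝ) → ℝ
  smooth : ∀ i, ContDiff ℝ (⊤ : ℕ∞) (H i)
  zero_at_zero : ∀ i, H i 0 = 0
  lagrangian : ∃ U : Set (Fin (2 * n) → ℝ), IsOpen U ∧ 0 ∈ U ∧
    ∀ x ∈ U, (∀ i, H i x = 0) →
      LinearIndependent ℝ (fun i => fderiv ℝ (H i) x) ∧
      ∀ u v : Fin (2 * n) → ℝ, (∀ i, fderiv ℝ (H i) x u = 0) →
        (∀ i, fderiv ℝ (H i) x v = 0) → stdSymp n u v = 0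

/-- The tangency order `t(f, L)` of a curve `f` to a Lagrangian submanifold-germ `L`:
the minimum over `i` of the order of vanishing at `0` of `Hᵢ ∘ f`. -/
def tOrd {n : ℕ} (f : ℝ → Fin (2 * n) → ℝ) (L : LagrangianGerm n) : ℕ∞ :=
  ⨅ i : Fin n, vanishOrder (fun t => L.H i (f t))

/-- The Lagrangian tangency order `Lt(f)` of a curve `f`. -/
def Lt1 {n : ℕ} (f : ℝ → Fin (2 * n) → ℝ) : ℕ∞ :=
  ⨆ L : LagrangianGerm n, tOrd f L

/-- The Lagrangian tangency order `Lt(f, g)` of a multi-germ of two curves. -/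
def Lt2 {n : ℕ} (f g : ℝ → Fin (2 * n) → ℝ) : ℕ∞ :=
  ⨆ L : LagrangianGerm n, min (tOrd f L) (tOrd g L)

/-- The Lagrangian tangency order `Lt(f, g, h)` of a multi-germ of three curves. -/
def Lt3 {n : ℕ} (f g h : ℝ → Fin (2 * n) → ℝ) : ℕ∞ :=
  ⨆ L : LagrangianGerm n, min (tOrd f L) (min (tOrd g L) (tOrd h L))


open Filter Topology Asymptotics in
lemma aux_mvt {E F : Type*} [NormedAddCommGroup E] [NormedSpace ℝ E]
    [NormedAddCommGroup F] [NormedSpace ℝ F] (f : E → F) (f' : E → E →L[ℝ] F)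
    (h0 : f 0 = 0) (hf : ∀ x, HasFDerivAt f (f' x) x) (k : ℕ)
    (hO : f' =O[𝓝 0] fun x => ‖x‖ ^ k) : f =O[𝓝 0] fun x => ‖x‖ ^ (k + 1) := by
  obtain ⟨C, hC0, hC⟩ := hO.exists_nonneg
  rw [isBigOWith_iff, Metric.eventually_nhds_iff_ball] at hC
  obtain ⟨ε, hε, hb⟩ := hC
  refine IsBigO.of_bound C ?_
  rw [Metric.eventually_nhds_iff_ball]
  refine ⟨ε, hε, fun x hx => ?_⟩
  have hx' : ‖x‖ < ε := by simpa using hx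
  have := (convex_closedBall (0 : E) ‖x‖).norm_image_sub_le_of_norm_hasFDerivWithin_le
    (f := f) (f' := f') (C := C * ‖x‖ ^ k) (x := 0) (y := x)
    (fun y _ => (hf y).hasFDerivWithinAt) (fun y hy => ?_) (by simp) (by simp)
  · simpa [h0, pow_succ, mul_assoc] using this
  · have hy' : ‖y‖ ≤ ‖x‖ := by simpa using hy
    have h1 := hb y (by simpa using lt_of_le_of_lt hy' hx')
    refine h1.trans ?_
    rw [Real.norm_of_nonneg (by positivity)]
    gcongr

open Filter Topology Asymptotics in
lemma aux_cubic {E : Type*} [NormedAddCommGroup E] [NormedSpace ℝ E]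
    (H : E → ℝ) (hH : ContDiff ℝ (⊤ : ℕ∞) H) (h0 : H 0 = 0) :
    (fun x => H x - fderiv ℝ H 0 x - (1 / 2 : ℝ) * fderiv ℝ (fderiv ℝ H) 0 x x)
      =O[𝓝 0] fun x => ‖x‖ ^ 3 := by
  have hK : ContDiff ℝ (⊤ : ℕ∞) (fderiv ℝ H) := hH.fderiv_right (by simp)
  have hD : ContDiff ℝ (⊤ : ℕ∞) (fderiv ℝ (fderiv ℝ H)) := hK.fderiv_right (by simp)
  have hsymm : IsSymmSndFDerivAt ℝ H 0 :=
    hH.contDiffAt.isSymmSndFDerivAt (by simp only [minSmoothness_of_isRCLikeNormedField]; exact WithTop.coe_le_coe.2 (le_top : (2 : ℕ∞) ≤ ⊤))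
  set D := fderiv ℝ (fderiv ℝ H) 0 with hDdef
  have h2 : (fun x => fderiv ℝ H x - fderiv ℝ H 0 - D x) =O[𝓝 0] fun x => ‖x‖ ^ 2 := by
    refine aux_mvt _ (fun x => fderiv ℝ (fderiv ℝ H) x - D) (by simp) (fun x => ?_) 1 ?_
    · exact (((hK.differentiable (by simp)) x).hasFDerivAt.sub_const _).sub D.hasFDerivAt
    · have := ((hD.differentiable (by simp)) 0).isBigO_sub
      simpa [hDdef] using this.norm_right
  refine aux_mvt _ (fun x => fderiv ℝ H x - fderiv ℝ H 0 - D x) (by simp [h0]) (fun x => ?_) 2 h2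
  have h3 : HasFDerivAt (fun x => D x x) ((D x).comp (ContinuousLinearMap.id ℝ E) + D.flip x) x :=
    D.hasFDerivAt.clm_apply (hasFDerivAt_id x)
  have h4 := ((((hH.differentiable (by simp)) x).hasFDerivAt.sub
    (fderiv ℝ H 0).hasFDerivAt).sub (h3.const_mul (1 / 2 : ℝ)))
  refine h4.congr_fderiv ?_
  ext y
  have := hsymm x y
  simp only [_root_.sub_apply, _root_.smul_apply,
    _root_.add_apply, ContinuousLinearMap.flip_apply, ContinuousLinearMap.comp_apply,
    ContinuousLinearMap.id_apply, smul_eq_mul]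
  rw [← hDdef] at this
  rw [this]; ring

open Filter Topology Asymptotics in
lemma aux_coef (N : ℕ) (c : ℕ → ℝ)
    (h : (fun t : ℝ => ∑ m ∈ Finset.range (N + 1), c m * t ^ m) =o[𝓝 0] fun t => t ^ N) :
    ∀ m ≤ N, c m = 0 := by
  intro m
  induction m using Nat.strong_induction_on with
  | _ m ih =>
  intro hm
  have h1 : (fun t : ℝ => ∑ j ∈ Finset.range (N + 1), c j * t ^ j) =o[𝓝[≠] 0] fun t => t ^ m := by
    refine (h.mono nhdsWithin_le_nhds).trans_isBigO ?_
    rcases hm.eq_or_lt with h | h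
    · subst h; exact isBigO_refl _ _
    · exact (isLittleO_pow_pow h).isBigO.mono nhdsWithin_le_nhds
  have h2 : (fun t : ℝ => c m * t ^ m) =o[𝓝[≠] 0] fun t => t ^ m := by
    have hs : (fun t : ℝ => ∑ j ∈ (Finset.range (N + 1)).erase m, c j * t ^ j)
        =o[𝓝[≠] 0] fun t => t ^ m := by
      refine IsLittleO.fun_sum fun j hj => ?_
      rcases lt_trichotomy j m with hjm | hjm | hjm
      · rw [ih j hjm (by omega)]; simp
      · simp [hjm] at hj
      · exact ((isLittleO_pow_pow hjm).const_mul_left _).mono nhdsWithin_le_nhds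
    refine (h1.sub hs).congr_left fun t => ?_
    rw [← Finset.add_sum_erase (Finset.range (N+1)) (fun j => c j * t ^ j) (a := m)
      (by simp; omega)]
    ring
  by_contra hc
  have h3 := (isLittleO_const_mul_left_iff hc).1 h2
  have := h3.eventuallyLE
  have h4 := h3.def (c := 1/2) (by norm_num)
  obtain ⟨t, ht, ht0⟩ := (h4.and self_mem_nhdsWithin).exists
  have : 0 < ‖t ^ m‖ := by
    have : t ≠ 0 := ht0
    exact norm_pos_iff.2 (pow_ne_zero _ this)
  linarith

open Filter Topology Asymptotics in
/-- Taylor coefficients from an asymptotic expansion. -/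
lemma aux_taylor (h : ℝ → ℝ) (hh : ContDiff ℝ (⊤ : ℕ∞) h) (N : ℕ) (a : ℕ → ℝ)
    (ha : (fun t : ℝ => h t - ∑ m ∈ Finset.range (N + 1), a m * t ^ m) =o[𝓝 0] fun t => t ^ N) :
    ∀ m ≤ N, iteratedDeriv m h 0 = m.factorial * a m := by
  have h1 := taylor_isLittleO_univ (x₀ := 0) (n := N) (f := h) (hh.of_le (by exact_mod_cast le_top))
  simp only [taylor_within_apply, sub_zero, iteratedDerivWithin_univ, smul_eq_mul] at h1
  have h2 := aux_coef N (fun m => (m.factorial : ℝ)⁻¹ * iteratedDeriv m h 0 - a m) ?_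
  · intro m hm
    have h3 := h2 m hm
    have : (m.factorial : ℝ) ≠ 0 := by positivity
    field_simp at h3
    linarith
  · refine (ha.sub h1).congr_left fun t => ?_
    simp only [sub_mul, Finset.sum_sub_distrib]
    have : ∀ k, ((k.factorial : ℝ)⁻¹ * t ^ k) * iteratedDeriv k h 0
      = (k.factorial : ℝ)⁻¹ * iteratedDeriv k h 0 * t ^ k := fun k => by ring
    simp only [this]
    ring

open Filter Topology Asymptotics in
lemma aux_curve {E : Type*} [NormedAddCommGroup E] [NormedSpace ℝ E]
    (H : E → ℝ) (hH : ContDiff ℝ (⊤ : ℕ∞) H) (h0 : H 0 = 0) (v w u : E) (f : ℝ → E)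
    (hf : ∀ t, f t = t ^ 2 • v + t ^ 3 • w + t ^ 5 • u) :
    iteratedDeriv 1 (fun t => H (f t)) 0 = 0 ∧
    iteratedDeriv 2 (fun t => H (f t)) 0 = 2 * fderiv ℝ H 0 v ∧
    iteratedDeriv 3 (fun t => H (f t)) 0 = 6 * fderiv ℝ H 0 w ∧
    iteratedDeriv 4 (fun t => H (f t)) 0 = 12 * fderiv ℝ (fderiv ℝ H) 0 v v ∧
    iteratedDeriv 5 (fun t => H (f t)) 0 =
      120 * (fderiv ℝ H 0 u + fderiv ℝ (fderiv ℝ H) 0 v w) := by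
  have hsymm : IsSymmSndFDerivAt ℝ H 0 :=
    hH.contDiffAt.isSymmSndFDerivAt (by simp only [minSmoothness_of_isRCLikeNormedField]; exact WithTop.coe_le_coe.2 (le_top : (2 : ℕ∞) ≤ ⊤))
  have hc := aux_cubic H hH h0
  set A := fderiv ℝ H 0 with hA
  set D := fderiv ℝ (fderiv ℝ H) 0 with hD
  obtain rfl : f = fun t => t ^ 2 • v + t ^ 3 • w + t ^ 5 • u := funext hf
  have hsm : ContDiff ℝ (⊤ : ℕ∞) (fun t : ℝ => t ^ 2 • v + t ^ 3 • w + t ^ 5 • u) := by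
    fun_prop
  have hlim : Tendsto (fun t : ℝ => t ^ 2 • v + t ^ 3 • w + t ^ 5 • u) (𝓝 0) (𝓝 0) := by
    have := hsm.continuous.tendsto 0
    simpa using this
  have hb : (fun t : ℝ => t ^ 2 • v + t ^ 3 • w + t ^ 5 • u) =O[𝓝 0] fun t : ℝ => t ^ 2 := by
    have key : ∀ k ≥ 2, ∀ z : E, (fun t : ℝ => t ^ k • z) =O[𝓝 0] fun t : ℝ => t ^ 2 := by
      intro k hk z
      have h1 : (fun t : ℝ => t ^ k) =O[𝓝 0] fun t : ℝ => t ^ 2 := by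
        rcases hk.eq_or_lt with h | h
        · subst h; exact isBigO_refl _ _
        · exact (isLittleO_pow_pow h).isBigO
      have := h1.smul (isBigO_refl (fun _ : ℝ => z) (𝓝 0))
      refine this.trans ?_
      have := (isBigO_refl (fun t : ℝ => t ^ 2) (𝓝 0)).smul
        (isBigO_const_const z (one_ne_zero (α := ℝ)) (𝓝 (0:ℝ)))
      simpa using this
    exact ((key 2 le_rfl v).add (key 3 (by norm_num) w)).add (key 5 (by norm_num) u)
  have h6 := (hc.comp_tendsto hlim).trans ((hb.norm_left).pow 3)
  have h7 : (fun t : ℝ => (t ^ 2) ^ 3) =o[𝓝 0] fun t : ℝ => t ^ 5 := by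
    simp only [← pow_mul]
    exact isLittleO_pow_pow (by norm_num)
  have h8 := h6.trans_isLittleO h7
  let a : ℕ → ℝ := fun m => if m = 2 then A v else if m = 3 then A w else
    if m = 4 then D v v / 2 else if m = 5 then A u + D v w else 0
  have hrem : (fun t : ℝ => (1/2 : ℝ) * (D w w) * t ^ 6 + (D v u) * t ^ 7 + (D w u) * t ^ 8
      + (1/2:ℝ) * D u u * t ^ 10) =o[𝓝 0] fun t : ℝ => t ^ 5 := by
    refine IsLittleO.add (IsLittleO.add (IsLittleO.add ?_ ?_) ?_) ?_ <;>
    exact (isLittleO_pow_pow (by norm_num)).const_mul_left _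
  have := aux_taylor (fun t => H (t ^ 2 • v + t ^ 3 • w + t ^ 5 • u)) (hH.comp hsm) 5 a ?_
  · refine ⟨?_, ?_, ?_, ?_, ?_⟩
    · rw [this 1 (by norm_num)]; simp [a]
    · rw [this 2 (by norm_num)]; simp [a]
    · rw [this 3 (by norm_num)]; simp [a, Nat.factorial]
    · rw [this 4 (by norm_num)]; simp [a, Nat.factorial]; ring
    · rw [this 5 (by norm_num)]; simp [a, Nat.factorial]
  · refine (h8.add hrem).congr_left fun t => ?_
    have e1 : D w v = D v w := hsymm w v
    have e2 : D u v = D v u := hsymm u v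
    have e3 : D u w = D w u := hsymm u w
    simp [a, Finset.sum_range_succ, e1, e2, e3]
    ring

lemma stdSymp_sub_right' {n : ℕ} (x y z : Fin (2 * n) → ℝ) :
    stdSymp n x (y - z) = stdSymp n x y - stdSymp n x z := by
  simp only [stdSymp, ← Finset.sum_sub_distrib, Pi.sub_apply]
  refine Finset.sum_congr rfl fun i _ => ?_
  ring

lemma stdSymp_hasDerivAt {n : ℕ} (a b : ℝ → Fin (2 * n) → ℝ) (a' b' : Fin (2 * n) → ℝ) (s : ℝ)
    (ha : HasDerivAt a a' s) (hb : HasDerivAt b b' s) :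
    HasDerivAt (fun t => stdSymp n (a t) (b t)) (stdSymp n a' (b s) + stdSymp n (a s) b') s := by
  rw [hasDerivAt_pi] at ha hb
  simp only [stdSymp, ← Finset.sum_add_distrib]
  refine HasDerivAt.fun_sum fun i _ => ?_
  convert! ((ha _).mul (hb _)).sub ((ha _).mul (hb _)) using 1
  ring

lemma aux_surj {E : Type*} [NormedAddCommGroup E] [NormedSpace ℝ E] {n : ℕ}
    (A : Fin n → E →L[ℝ] ℝ) (hA : LinearIndependent ℝ A) :
    Function.Surjective (ContinuousLinearMap.pi A) := by
  have : LinearMap.range (ContinuousLinearMap.pi A : E →ₗ[ℝ] (Fin n → ℝ)) = ⊤ := by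
    by_contra hne
    obtain ⟨f, hf, hle⟩ := Submodule.exists_le_ker_of_lt_top _ (lt_top_iff_ne_top.2 hne)
    apply hf
    have hz : ∑ i, f (Pi.single i 1) • A i = 0 := by
      ext x
      have h1 : f (ContinuousLinearMap.pi A x) = 0 := hle ⟨x, rfl⟩
      rw [← Finset.univ_sum_single (ContinuousLinearMap.pi A x), map_sum] at h1
      simp only [_root_.sum_apply, _root_.smul_apply, smul_eq_mul,
        _root_.zero_apply]
      rw [← h1]
      refine Finset.sum_congr rfl fun i _ => ?_
      have : Pi.single i ((ContinuousLinearMap.pi A x) i) = (A i x) • (Pi.single i (1:ℝ) : Fin n → ℝ) := by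
        rw [← Pi.single_smul]; simp
      rw [this, map_smul, smul_eq_mul, mul_comm]
    have h0 := Fintype.linearIndependent_iff.1 hA _ hz
    refine LinearMap.pi_ext' fun i => ?_
    ext
    simpa using h0 i
  exact LinearMap.range_eq_top.1 this

open Filter Topology in
lemma aux_chart {E : Type*} [NormedAddCommGroup E] [NormedSpace ℝ E] [FiniteDimensional ℝ E]
    {n : ℕ} (H : Fin n → E → ℝ) (hs : ∀ i, ContDiff ℝ (⊤ : ℕ∞) (H i)) (hz : ∀ i, H i 0 = 0)
    (hli : LinearIndependent ℝ (fun i => fderiv ℝ (H i) 0)) :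
    ∃ ψ : E → E, ψ 0 = 0 ∧ ContDiffAt ℝ (⊤ : ℕ∞) ψ 0 ∧ fderiv ℝ ψ 0 = ContinuousLinearMap.id ℝ E ∧
      ∀ᶠ y in 𝓝 0, ∀ i, H i (ψ y) = fderiv ℝ (H i) 0 y := by
  have hsurj := aux_surj _ hli
  set A := ContinuousLinearMap.pi (fun i => fderiv ℝ (H i) 0) with hA
  obtain ⟨R, hR⟩ := LinearMap.exists_rightInverse_of_surjective
    (A : (E) →ₗ[ℝ] (Fin n → ℝ)) (LinearMap.range_eq_top.2 hsurj)
  have hR' : ∀ y, A (R y) = y := fun y => LinearMap.congr_fun hR y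
  set R' := LinearMap.toContinuousLinearMap R with hRdef
  have hR'' : ∀ y, A (R' y) = y := hR'
  set Hv : (E) → (Fin n → ℝ) := fun x i => H i x with hHv
  have hHs : ContDiff ℝ (⊤ : ℕ∞) Hv := contDiff_pi.2 hs
  have hHd : HasFDerivAt Hv A 0 := by
    rw [hasFDerivAt_pi']
    intro i
    exact ((hs i).differentiable (by simp) 0).hasFDerivAt
  have hHi : ∀ i x, HasFDerivAt (H i) (fderiv ℝ (H i) x) x := fun i x =>
    ((hs i).differentiable (by simp) x).hasFDerivAt
  set F : (E) → (E) := fun x => x + R' (Hv x - A x) with hF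
  have hFs : ContDiff ℝ (⊤ : ℕ∞) F :=
    contDiff_id.add (R'.contDiff.comp (hHs.sub A.contDiff))
  have hF0 : F 0 = 0 := by
    have : Hv 0 = 0 := funext hz
    simp [hF, this]
  have hFd : HasFDerivAt F
      ((ContinuousLinearEquiv.refl ℝ (E)) : (E) →L[ℝ] (E)) 0 := by
    have h1 := (hasFDerivAt_id (𝕜 := ℝ) (0 : E)).add
      (R'.hasFDerivAt.comp 0 (hHd.sub A.hasFDerivAt))
    refine h1.congr_fderiv ?_
    ext1 x
    simp
  have hAF : ∀ x, A (F x) = Hv x := fun x => by simp [hF, hR'']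
  have hne : ((⊤ : ℕ∞) : WithTop ℕ∞) ≠ 0 := by simp
  set ψ := hFs.contDiffAt.localInverse hFd hne with hψ
  have hψ0 : ψ 0 = 0 := by
    have := hFs.contDiffAt.localInverse_apply_image hFd hne
    rwa [hF0] at this
  have hψs : ContDiffAt ℝ (⊤ : ℕ∞) ψ 0 := by
    have := hFs.contDiffAt.to_localInverse hFd hne
    rwa [hF0] at this
  have hFψ : ∀ᶠ y in 𝓝 0, F (ψ y) = y := by
    have := (hFs.contDiffAt.hasStrictFDerivAt' hFd hne).eventually_right_inverse
    rwa [hF0] at this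
  have hψd : fderiv ℝ ψ 0 = ContinuousLinearMap.id ℝ _ := by
    have := (hFs.contDiffAt.hasStrictFDerivAt' hFd hne).to_localInverse.hasFDerivAt
    rw [hF0] at this
    exact this.fderiv
  have hHψ : ∀ᶠ y in 𝓝 0, ∀ i, H i (ψ y) = fderiv ℝ (H i) 0 y := by
    filter_upwards [hFψ] with y hy i
    have := congrFun (hAF (ψ y)) i
    rw [hy] at this
    exact this.symm
  exact ⟨ψ, hψ0, hψs, hψd, hHψ⟩

open Filter Topology in
lemma aux_line {E : Type*} [NormedAddCommGroup E] [NormedSpace ℝ E] [FiniteDimensional ℝ E]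
    {n : ℕ} (H : Fin n → E → ℝ) (hs : ∀ i, ContDiff ℝ (⊤ : ℕ∞) (H i)) (hz : ∀ i, H i 0 = 0)
    (hli : LinearIndependent ℝ (fun i => fderiv ℝ (H i) 0)) (v w : E)
    (hv : ∀ i, fderiv ℝ (H i) 0 v = 0) (hw : ∀ i, fderiv ℝ (H i) 0 w = 0) :
    ∃ (γ a b : ℝ → E) (a' b' : E), γ 0 = 0 ∧ ContinuousAt γ 0 ∧ a 0 = v ∧ b 0 = w ∧
      HasDerivAt a a' 0 ∧ HasDerivAt b b' 0 ∧
      (∀ᶠ s in 𝓝 0, ∀ i, H i (γ s) = 0) ∧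
      (∀ᶠ s in 𝓝 0, ∀ i, fderiv ℝ (H i) (γ s) (a s) = 0) ∧
      (∀ᶠ s in 𝓝 0, ∀ i, fderiv ℝ (H i) (γ s) (b s) = 0) ∧
      (∀ i, fderiv ℝ (H i) 0 a' + fderiv ℝ (fderiv ℝ (H i)) 0 v v = 0) ∧
      (∀ i, fderiv ℝ (H i) 0 b' + fderiv ℝ (fderiv ℝ (H i)) 0 v w = 0) := by
  obtain ⟨ψ, hψ0, hψs, hψd, hHψ⟩ := aux_chart H hs hz hli
  have hHi : ∀ i x, HasFDerivAt (H i) (fderiv ℝ (H i) x) x := fun i x =>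
    ((hs i).differentiable (by simp) x).hasFDerivAt
  have hψdiff : ∀ᶠ y in 𝓝 0, DifferentiableAt ℝ ψ y := by
    have h1 : ContDiffAt ℝ 1 ψ 0 := hψs.of_le (by exact_mod_cast le_top)
    filter_upwards [h1.eventually (by simp)] with y hy
    exact hy.differentiableAt (by simp)
  have hDψ : ∀ᶠ y in 𝓝 0, ∀ i z, fderiv ℝ (H i) (ψ y) (fderiv ℝ ψ y z) = fderiv ℝ (H i) 0 z := by
    filter_upwards [hHψ.eventually_nhds, hψdiff] with y hy hd i z
    have h1 := (hHi i (ψ y)).comp y hd.hasFDerivAt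
    have h2 : HasFDerivAt (H i ∘ ψ) (fderiv ℝ (H i) 0) y :=
      (fderiv ℝ (H i) 0).hasFDerivAt.congr_of_eventuallyEq (by
        filter_upwards [hy] with x hx using hx i)
    have := h1.unique h2
    rw [← this]; rfl
  -- restrict to the line
  have hline : HasDerivAt (fun s : ℝ => s • v) v 0 := by
    simpa using (hasDerivAt_id (0:ℝ)).smul_const v
  have hlim : Tendsto (fun s : ℝ => s • v) (𝓝 0) (𝓝 0) := by
    simpa using hline.continuousAt.tendsto
  have hψ' : DifferentiableAt ℝ (fderiv ℝ ψ) 0 := by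
    have h1 : ContDiffAt ℝ 1 (fderiv ℝ ψ) 0 := hψs.fderiv_right (by simp only [one_add_one_eq_two]; exact WithTop.coe_le_coe.2 (le_top : (2 : ℕ∞) ≤ ⊤))
    exact h1.differentiableAt (by simp)
  have hψv : HasDerivAt (fun s : ℝ => fderiv ℝ ψ (s • v)) (fderiv ℝ (fderiv ℝ ψ) 0 v) 0 := by
    have h1 : HasFDerivAt (fderiv ℝ ψ) (fderiv ℝ (fderiv ℝ ψ) 0) ((0:ℝ) • v) := by
      simpa using hψ'.hasFDerivAt
    exact h1.comp_hasDerivAt 0 hline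
  have hab : ∀ z, HasDerivAt (fun s : ℝ => fderiv ℝ ψ (s • v) z) (fderiv ℝ (fderiv ℝ ψ) 0 v z) 0 := by
    intro z
    simpa using hψv.clm_apply (hasDerivAt_const (0:ℝ) z)
  have hγ : HasDerivAt (fun s : ℝ => ψ (s • v)) v 0 := by
    have h1 : HasFDerivAt ψ (ContinuousLinearMap.id ℝ _) ((0:ℝ) • v) := by
      have := (hψs.differentiableAt (by simp)).hasFDerivAt
      rw [hψd] at this
      simpa using this
    exact h1.comp_hasDerivAt 0 hline
  have hz0 : ∀ z, fderiv ℝ ψ ((0:ℝ) • v) z = z := by intro z; simp [hψd]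
  have key : ∀ z, (∀ i, fderiv ℝ (H i) 0 z = 0) → ∀ i,
      fderiv ℝ (H i) 0 (fderiv ℝ (fderiv ℝ ψ) 0 v z) + fderiv ℝ (fderiv ℝ (H i)) 0 v z = 0 := by
    intro z hz i
    have hK : ContDiff ℝ (⊤ : ℕ∞) (fderiv ℝ (H i)) := (hs i).fderiv_right (by simp)
    have h1 : HasFDerivAt (fderiv ℝ (H i)) (fderiv ℝ (fderiv ℝ (H i)) 0) (ψ ((0:ℝ) • v)) := by
      simpa [hψ0] using (hK.differentiable (by simp) 0).hasFDerivAt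
    have h1' : HasDerivAt (fun s : ℝ => fderiv ℝ (H i) (ψ (s • v)))
        (fderiv ℝ (fderiv ℝ (H i)) 0 v) 0 := h1.comp_hasDerivAt (0:ℝ) hγ
    have h3 : HasDerivAt (fun s : ℝ => fderiv ℝ (H i) (ψ (s • v)) (fderiv ℝ ψ (s • v) z)) 0 0 := by
      refine (hasDerivAt_const (0:ℝ) (0:ℝ)).congr_of_eventuallyEq ?_
      filter_upwards [hlim.eventually hDψ] with s hs
      rw [hs, hz]
    have h4 := (h1'.clm_apply (hab z)).unique h3
    rw [hz0 z, zero_smul, hψ0] at h4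
    linarith
  refine ⟨fun s => ψ (s • v), fun s => fderiv ℝ ψ (s • v) v, fun s => fderiv ℝ ψ (s • v) w, _, _,
    by simp [hψ0], hγ.continuousAt, hz0 v, hz0 w, hab v, hab w, ?_, ?_, ?_, key v hv, key w hw⟩
  · filter_upwards [hlim.eventually hHψ] with s h1 i
    rw [h1]; simp [hv]
  · filter_upwards [hlim.eventually hDψ] with s h1 i
    rw [h1, hv]
  · filter_upwards [hlim.eventually hDψ] with s h1 i
    rw [h1, hw]

open Filter Topology in
lemma lag_second {n : ℕ} (L : LagrangianGerm n) (v w : Fin (2 * n) → ℝ)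
    (hv : ∀ i, fderiv ℝ (L.H i) 0 v = 0) (hw : ∀ i, fderiv ℝ (L.H i) 0 w = 0) :
    ∃ a b : Fin (2 * n) → ℝ,
      (∀ i, fderiv ℝ (L.H i) 0 a + fderiv ℝ (fderiv ℝ (L.H i)) 0 v v = 0) ∧
      (∀ i, fderiv ℝ (L.H i) 0 b + fderiv ℝ (fderiv ℝ (L.H i)) 0 v w = 0) ∧
      stdSymp n a w + stdSymp n v b = 0 := by
  obtain ⟨U, hUo, hU0, hU⟩ := L.lagrangian
  obtain ⟨γ, a, b, a', b', hγ0, hγc, ha0, hb0, ha, hb, h1, h2, h3, h4, h5⟩ :=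
    aux_line L.H L.smooth L.zero_at_zero (hU 0 hU0 L.zero_at_zero).1 v w hv hw
  refine ⟨a', b', h4, h5, ?_⟩
  have e1 := stdSymp_hasDerivAt a b a' b' 0 ha hb
  have e2 : HasDerivAt (fun s : ℝ => stdSymp n (a s) (b s)) 0 0 := by
    refine (hasDerivAt_const (0:ℝ) (0:ℝ)).congr_of_eventuallyEq ?_
    have hψU : ∀ᶠ s in 𝓝 0, γ s ∈ U :=
      hγc.eventually_mem (by rw [hγ0]; exact hUo.mem_nhds hU0)
    filter_upwards [h1, h2, h3, hψU] with s k1 k2 k3 k4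
    exact (hU _ k4 k1).2 _ _ k2 k3
  have e3 := e1.unique e2
  rwa [ha0, hb0] at e3

lemma deriv_of_lt_tOrd {n : ℕ} {f : ℝ → Fin (2 * n) → ℝ} {L : LagrangianGerm n} {k : ℕ}
    (h : (k : ℕ∞) < tOrd f L) (i : Fin n) (m : ℕ) (h1 : 1 ≤ m) (hm : m ≤ k) :
    iteratedDeriv m (fun t => L.H i (f t)) 0 = 0 := by
  by_contra hne
  have h2 : tOrd f L ≤ vanishOrder (fun t => L.H i (f t)) := iInf_le _ i
  have h3 : vanishOrder (fun t => L.H i (f t)) ≤ (m : ℕ∞) := sInf_le ⟨m, rfl, h1, hne⟩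
  have h4 : (m : ℕ∞) ≤ k := by exact_mod_cast hm
  exact absurd (h.trans_le (h2.trans (h3.trans h4))) (lt_irrefl _)

lemma le_tOrd {n : ℕ} {f : ℝ → Fin (2 * n) → ℝ} {L : LagrangianGerm n} (K : ℕ)
    (h : ∀ i, ∃ (c : ℝ) (k : ℕ), K ≤ k ∧ ∀ t, L.H i (f t) = c * t ^ k) :
    (K : ℕ∞) ≤ tOrd f L := by
  refine le_iInf fun i => le_sInf ?_
  rintro _ ⟨m, rfl, h1, hm⟩
  obtain ⟨c, k, hk, ht⟩ := h i
  by_contra hlt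
  have hlt : m < K := by
    rw [not_le] at hlt
    exact_mod_cast hlt
  apply hm
  have : (fun t => L.H i (f t)) = fun t => c * t ^ k := funext ht
  rw [this, iteratedDeriv_const_mul_field, iteratedDeriv_fun_pow_zero, if_neg (by omega)]
  simp

lemma hIdx {n : ℕ} (i : Fin n) (b : Bool) : 2 * i.val + b.toNat < 2 * n := by
  have := i.isLt
  have := b.toNat_le
  omega

/-- Coordinate Lagrangian subspaces. -/
def coordL (n : ℕ) (s : Fin n → Bool) : LagrangianGerm n where
  H i x := x ⟨2 * i.val + (s i).toNat, hIdx i (s i)⟩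
  smooth i := by fun_prop
  zero_at_zero i := rfl
  lagrangian := by
    have hf : ∀ (i : Fin n) (x : Fin (2 * n) → ℝ),
        fderiv ℝ (fun x : Fin (2 * n) → ℝ => x ⟨2 * i.val + (s i).toNat, hIdx i (s i)⟩) x
        = ContinuousLinearMap.proj ⟨2 * i.val + (s i).toNat, hIdx i (s i)⟩ := fun i x =>
      (ContinuousLinearMap.proj (R := ℝ) (φ := fun _ : Fin (2 * n) => ℝ)
        ⟨2 * i.val + (s i).toNat, hIdx i (s i)⟩).hasFDerivAt.fderiv
    refine ⟨Set.univ, isOpen_univ, trivial, fun x _ _ => ⟨?_, ?_⟩⟩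
    · simp only [hf]
      rw [Fintype.linearIndependent_iff]
      intro g hg i
      have h1 := DFunLike.congr_fun hg (Pi.single ⟨2 * i.val + (s i).toNat, hIdx i (s i)⟩ (1:ℝ))
      simp only [_root_.sum_apply, _root_.smul_apply,
        ContinuousLinearMap.proj_apply, _root_.zero_apply, smul_eq_mul] at h1
      rw [Finset.sum_eq_single i] at h1
      · simpa using h1
      · intro j _ hj
        rw [Pi.single_eq_of_ne, mul_zero]
        intro he
        have he := congrArg Fin.val he
        have := (s i).toNat_le
        have := (s j).toNat_le
        simp only at he
        exact hj (Fin.ext (by omega))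
      · simp
    · intro u v hu hv
      simp only [hf, ContinuousLinearMap.proj_apply] at hu hv
      refine Finset.sum_eq_zero fun i _ => ?_
      have h1 := hu i
      have h2 := hv i
      rcases hs : s i with _ | _ <;> simp only [hs, Bool.toNat_false, Bool.toNat_true, add_zero] at h1 h2 <;>
        rw [h1, h2] <;> ring

lemma ker_iso {n : ℕ} (L : LagrangianGerm n) (u v : Fin (2 * n) → ℝ)
    (hu : ∀ i, fderiv ℝ (L.H i) 0 u = 0) (hv : ∀ i, fderiv ℝ (L.H i) 0 v = 0) :
    stdSymp n u v = 0 := by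
  obtain ⟨U, _, h0, h⟩ := L.lagrangian
  exact (h 0 h0 L.zero_at_zero).2 u v hu hv

lemma T7_main
    (n : ℕ) (hn : 2 ≤ n) (c₁ c₂ : ℝ)
    (B₁ B₂ : ℝ → Fin (2 * n) → ℝ)
    (hB₁ : B₁ = fun (t : ℝ) (j : Fin (2 * n)) => if (j : ℕ) = 0 then t ^ 3 else if (j : ℕ) = 1 then -t ^ 2 else if (j : ℕ) = 3 then -c₁ * t ^ 2 else (0 : ℝ))
    (hB₂ : B₂ = fun (t : ℝ) (j : Fin (2 * n)) => if (j : ℕ) = 0 then t ^ 3 else if (j : ℕ) = 2 then -t ^ 2 else if (j : ℕ) = 3 then c₂ * t ^ 5 else (0 : ℝ)) :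
    Lt1 B₁ = 3 ∧
    (c₂ ≠ 0 → Lt1 B₂ = 5) ∧ (c₂ = 0 → Lt1 B₂ = ⊤) ∧
    (c₁ ≠ 0 → Lt2 B₁ B₂ = 2) ∧ (c₁ = 0 → Lt2 B₁ B₂ = 3) := by
  set v₁ : Fin (2 * n) → ℝ := fun j => if (j : ℕ) = 1 then -1 else if (j : ℕ) = 3 then -c₁ else 0 with hv₁
  set v₂ : Fin (2 * n) → ℝ := fun j => if (j : ℕ) = 2 then -1 else 0 with hv₂
  set w : Fin (2 * n) → ℝ := fun j => if (j : ℕ) = 0 then 1 else 0 with hw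
  set u : Fin (2 * n) → ℝ := fun j => if (j : ℕ) = 3 then c₂ else 0 with hu
  have e₁ : ∀ t, B₁ t = t ^ 2 • v₁ + t ^ 3 • w + t ^ 5 • (0 : Fin (2 * n) → ℝ) := by
    intro t
    ext j
    simp only [hB₁, hv₁, hw, Pi.add_apply, Pi.smul_apply, smul_eq_mul, Pi.zero_apply]
    split_ifs <;> first | omega | ring
  have e₂ : ∀ t, B₂ t = t ^ 2 • v₂ + t ^ 3 • w + t ^ 5 • u := by
    intro t
    ext j
    simp only [hB₂, hv₂, hw, hu, Pi.add_apply, Pi.smul_apply, smul_eq_mul]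
    split_ifs <;> first | omega | ring
  have D₁ := fun (L : LagrangianGerm n) i => aux_curve (L.H i) (L.smooth i) (L.zero_at_zero i) _ _ _ B₁ e₁
  have D₂ := fun (L : LagrangianGerm n) i => aux_curve (L.H i) (L.smooth i) (L.zero_at_zero i) _ _ _ B₂ e₂
  have s1 : stdSymp n v₁ w = 1 := by
    rw [stdSymp, Finset.sum_eq_single ⟨0, by omega⟩]
    · simp [hv₁, hw]
    · intro i _ hi
      have : (i : ℕ) ≠ 0 := fun h => hi (Fin.ext h)
      simp [hw, this]
    · simp
  have s2 : stdSymp n v₁ v₂ = -c₁ := by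
    rw [stdSymp, Finset.sum_eq_single ⟨1, by omega⟩]
    · simp [hv₁, hv₂]
    · intro i _ hi
      have h1 : ¬ (2 * (i : ℕ) = 2) := fun h => hi (Fin.ext (by simp; omega))
      have h2 : ¬ (2 * (i : ℕ) + 1 = 2) := by omega
      simp only [hv₂, h1, h2, if_false]; ring
    · simp
  have s3 : stdSymp n v₂ u = -c₂ := by
    rw [stdSymp, Finset.sum_eq_single ⟨1, by omega⟩]
    · simp [hu, hv₂]
    · intro i _ hi
      have h1 : ¬ (2 * (i : ℕ) = 2) := fun h => hi (Fin.ext (by simp; omega))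
      have h2 : ¬ (2 * (i : ℕ) + 1 = 2) := by omega
      simp only [hv₂, h1, h2, if_false]; ring
    · simp
  -- upper bounds
  have up1 : ∀ L : LagrangianGerm n, tOrd B₁ L ≤ 3 := by
    intro L
    by_contra hlt
    rw [not_le] at hlt
    have hd := fun i m => deriv_of_lt_tOrd (k := 3) hlt i m
    have := ker_iso L v₁ w (fun i => ?_) (fun i => ?_)
    · rw [s1] at this; norm_num at this
    · have := hd i 2 (by norm_num) (by norm_num); rw [(D₁ L i).2.1] at this; linarith
    · have := hd i 3 (by norm_num) (by norm_num); rw [(D₁ L i).2.2.1] at this; linarith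
  have up2 : c₂ ≠ 0 → ∀ L : LagrangianGerm n, tOrd B₂ L ≤ 5 := by
    intro hc L
    by_contra hlt
    rw [not_le] at hlt
    have hd := fun i m => deriv_of_lt_tOrd (k := 5) hlt i m
    have hv : ∀ i, fderiv ℝ (L.H i) 0 v₂ = 0 := fun i => by
      have := hd i 2 (by norm_num) (by norm_num); rw [(D₂ L i).2.1] at this; linarith
    have hw' : ∀ i, fderiv ℝ (L.H i) 0 w = 0 := fun i => by
      have := hd i 3 (by norm_num) (by norm_num); rw [(D₂ L i).2.2.1] at this; linarith
    have h4 : ∀ i, fderiv ℝ (fderiv ℝ (L.H i)) 0 v₂ v₂ = 0 := fun i => by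
      have := hd i 4 (by norm_num) (by norm_num); rw [(D₂ L i).2.2.2.1] at this; linarith
    have h5 : ∀ i, fderiv ℝ (L.H i) 0 u + fderiv ℝ (fderiv ℝ (L.H i)) 0 v₂ w = 0 := fun i => by
      have := hd i 5 (by norm_num) (by norm_num); rw [(D₂ L i).2.2.2.2] at this; linarith
    obtain ⟨a, b, ha, hb, hab⟩ := lag_second L v₂ w hv hw'
    have ha0 := ker_iso L a w (fun i => by have := ha i; rw [h4 i] at this; linarith) hw'
    have hbu := ker_iso L v₂ (b - u) hv (fun i => by
      rw [map_sub]; linarith [hb i, h5 i])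
    rw [stdSymp_sub_right', s3] at hbu
    apply hc
    linarith
  have up3 : c₁ ≠ 0 → ∀ L : LagrangianGerm n, min (tOrd B₁ L) (tOrd B₂ L) ≤ 2 := by
    intro hc L
    by_contra hlt
    rw [not_le, lt_min_iff] at hlt
    have hd1 := fun i m => deriv_of_lt_tOrd (k := 2) hlt.1 i m
    have hd2 := fun i m => deriv_of_lt_tOrd (k := 2) hlt.2 i m
    have := ker_iso L v₁ v₂ (fun i => ?_) (fun i => ?_)
    · rw [s2] at this; apply hc; linarith
    · have := hd1 i 2 (by norm_num) (by norm_num); rw [(D₁ L i).2.1] at this; linarith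
    · have := hd2 i 2 (by norm_num) (by norm_num); rw [(D₂ L i).2.1] at this; linarith
  -- lower bounds
  let P := coordL n (fun _ => false)
  let Q := coordL n (fun _ => true)
  let M := coordL n (fun i => decide ((i : ℕ) ≠ 0))
  have lowP1 : (3 : ℕ∞) ≤ tOrd B₁ P := by
    refine le_tOrd 3 fun i => ?_
    by_cases h0 : (i : ℕ) = 0
    · exact ⟨1, 3, le_rfl, fun t => by simp [P, coordL, hB₁, h0]⟩
    · refine ⟨0, 3, le_rfl, fun t => ?_⟩
      have h1 : ¬ (2 * (i : ℕ) = 1) := by omega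
      have h3 : ¬ (2 * (i : ℕ) = 3) := by omega
      simp [P, coordL, hB₁, h0, h1, h3]
  have lowQ1 : (2 : ℕ∞) ≤ tOrd B₁ Q := by
    refine le_tOrd 2 fun i => ?_
    by_cases h0 : (i : ℕ) = 0
    · exact ⟨-1, 2, le_rfl, fun t => by simp [Q, coordL, hB₁, h0]⟩
    · by_cases h1 : (i : ℕ) = 1
      · exact ⟨-c₁, 2, le_rfl, fun t => by simp [Q, coordL, hB₁, h1]⟩
      · refine ⟨0, 2, le_rfl, fun t => ?_⟩
        have h3 : ¬ (2 * (i : ℕ) + 1 = 3) := by omega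
        simp [Q, coordL, hB₁, h0, h1]
  have lowQ2 : ∀ K : ℕ, (c₂ = 0 ∨ K ≤ 5) → (K : ℕ∞) ≤ tOrd B₂ Q := by
    intro K hK
    refine le_tOrd K fun i => ?_
    by_cases h1 : (i : ℕ) = 1
    · rcases hK with hK | hK
      · exact ⟨0, K, le_rfl, fun t => by simp [Q, coordL, hB₂, h1, hK]⟩
      · exact ⟨c₂, 5, hK, fun t => by simp [Q, coordL, hB₂, h1]⟩
    · refine ⟨0, K, le_rfl, fun t => ?_⟩
      have h2 : ¬ (2 * (i : ℕ) + 1 = 2) := by omega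
      simp [Q, coordL, hB₂, h1, h2]
  have lowM1 : c₁ = 0 → (3 : ℕ∞) ≤ tOrd B₁ M := by
    intro hc
    refine le_tOrd 3 fun i => ?_
    by_cases h0 : (i : ℕ) = 0
    · exact ⟨1, 3, le_rfl, fun t => by simp [M, coordL, hB₁, h0]⟩
    · refine ⟨0, 3, le_rfl, fun t => ?_⟩
      simp [M, coordL, hB₁, h0, hc]
  have lowM2 : (3 : ℕ∞) ≤ tOrd B₂ M := by
    refine le_tOrd 3 fun i => ?_
    by_cases h0 : (i : ℕ) = 0
    · exact ⟨1, 3, le_rfl, fun t => by simp [M, coordL, hB₂, h0]⟩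
    · have h2 : ¬ (2 * (i : ℕ) + 1 = 2) := by omega
      by_cases h1 : (i : ℕ) = 1
      · exact ⟨c₂, 5, by norm_num, fun t => by simp [M, coordL, hB₂, h1]⟩
      · refine ⟨0, 3, le_rfl, fun t => ?_⟩
        simp [M, coordL, hB₂, h0, h1, h2]
  refine ⟨le_antisymm (iSup_le up1) (lowP1.trans (le_iSup (tOrd B₁) P)), fun hc => ?_, fun hc => ?_,
    fun hc => ?_, fun hc => ?_⟩
  · exact le_antisymm (iSup_le (up2 hc)) ((lowQ2 5 (Or.inr le_rfl)).trans (le_iSup (tOrd B₂) Q))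
  · refine ENat.eq_top_iff_forall_ge.2 fun K => ?_
    exact (lowQ2 K (Or.inl hc)).trans (le_iSup (tOrd B₂) Q)
  · refine le_antisymm (iSup_le (up3 hc)) ?_
    exact (le_min lowQ1 (lowQ2 2 (Or.inr (by norm_num)))).trans
      (le_iSup (fun L => min (tOrd B₁ L) (tOrd B₂ L)) Q)
  · refine le_antisymm (iSup_le fun L => (min_le_left _ _).trans (up1 L)) ?_
    exact (le_min (lowM1 hc) lowM2).trans
      (le_iSup (fun L => min (tOrd B₁ L) (tOrd B₂ L)) M)

/-- Lagrangian tangency orders for the class `(T₇)¹`. -/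
theorem T7_1_lagrangian_tangency_orders
    (n : ℕ) (hn : 2 ≤ n) (c₁ c₂ : ℝ)
    (B₁ B₂ : ℝ → Fin (2 * n) → ℝ)
    (hB₁ : B₁ = fun (t : ℝ) (j : Fin (2 * n)) => if (j : ℕ) = 0 then t ^ 3 else if (j : ℕ) = 1 then -t ^ 2 else if (j : ℕ) = 3 then -c₁ * t ^ 2 else (0 : ℝ))
    (hB₂ : B₂ = fun (t : ℝ) (j : Fin (2 * n)) => if (j : ℕ) = 0 then t ^ 3 else if (j : ℕ) = 2 then -t ^ 2 else if (j : ℕ) = 3 then c₂ * t ^ 5 else (0 : ℝ)) :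
    Lt1 B₁ = 3 ∧
    (c₂ ≠ 0 → Lt1 B₂ = 5) ∧ (c₂ = 0 → Lt1 B₂ = ⊤) ∧
    (c₁ ≠ 0 → Lt2 B₁ B₂ = 2) ∧ (c₁ = 0 → Lt2 B₁ B₂ = 3) := by
  exact T7_main n hn c₁ c₂ B₁ B₂ hB₁ hB₂

end
end

section
/- Let n ≥ 2 and let c₁, c₂ ∈ ℝ with (c₁,c₂) ≠ (0,0). Consider the two curve-germs in ℝ^{2n} (coordinates (p₁,q₁,p₂,q₂,…,pₙ,qₙ), all unlisted coordinates equal to 0): B₁(t) = (t³, (c₁²/2)t⁴, 0, −t², 0, …, 0) and B₂(t) = (t³, (c₂²/2)t⁴, −t², 0, 0, …, 0) (the class (T₇)²). Then Lt(B₁,B₂) = 2; Lt(B₁) = 5 if c₁ ≠ 0 and Lt(B₁) = ∞ if c₁ = 0; Lt(B₂) = 5 if c₂ ≠ 0 and Lt(B₂) = ∞ if c₂ = 0. -/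
noncomputable section

open Asymptotics Filter Topology

namespace T7aux

lemma bigO_of_deriv {E F : Type*} [NormedAddCommGroup E] [NormedSpace ℝ E]
    [NormedAddCommGroup F] [NormedSpace ℝ F] (g : E → F) (g' : E → E →L[ℝ] F) (k : ℕ)
    (hg : ∀ x, HasFDerivAt g (g' x) x) (h0 : g 0 = 0)
    (hO : g' =O[𝓝 0] fun x => ‖x‖ ^ k) : g =O[𝓝 0] fun x => ‖x‖ ^ (k + 1) := by
  obtain ⟨C, hC⟩ := hO.bound
  obtain ⟨ε, hε, hb⟩ := Metric.eventually_nhds_iff_ball.1 hC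
  refine IsBigO.of_bound C ?_
  filter_upwards [Metric.ball_mem_nhds (0 : E) hε] with x hx
  have hx' : ‖x‖ < ε := by simpa using hx
  have hCn : 0 ≤ ‖x‖ := norm_nonneg x
  have hC0 : ∀ y ∈ Metric.closedBall (0 : E) ‖x‖, ‖g' y‖ ≤ |C| * ‖x‖ ^ k := by
    intro y hy
    have hy' : ‖y‖ ≤ ‖x‖ := by simpa using hy
    have := hb y (by simpa using lt_of_le_of_lt hy' hx')
    rw [Real.norm_of_nonneg (by positivity)] at this
    calc _ ≤ _ := this
      _ ≤ |C| * ‖y‖ ^ k := by gcongr; exact le_abs_self C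
      _ ≤ _ := by gcongr
  have hC1 : ∀ y ∈ Metric.closedBall (0 : E) ‖x‖, ‖g' y‖ ≤ C * ‖x‖ ^ k ∨ C < 0 := by
    intro y hy
    rcases le_or_gt 0 C with h | h
    · left; simpa [abs_of_nonneg h] using hC0 y hy
    · right; exact h
  rcases le_or_gt 0 C with h | h
  · have := (convex_closedBall (0 : E) ‖x‖).norm_image_sub_le_of_norm_hasFDerivWithin_le
      (fun y _ => (hg y).hasFDerivWithinAt) (fun y hy => (hC1 y hy).resolve_right (not_lt.2 h))
      (show (0 : E) ∈ _ by simp) (show x ∈ _ by simp)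
    rw [h0, sub_zero, sub_zero] at this
    rw [Real.norm_of_nonneg (by positivity), pow_succ, ← mul_assoc]
    exact this
  · have hz : ‖x‖ = 0 := by
      by_contra hne
      have h1 := hb x hx
      have h2 : 0 < ‖x‖ := lt_of_le_of_ne hCn (Ne.symm hne)
      rw [Real.norm_of_nonneg (by positivity)] at h1
      have : C * ‖x‖ ^ k < 0 := mul_neg_of_neg_of_pos h (by positivity)
      linarith [norm_nonneg (g' x)]
    have : x = 0 := norm_eq_zero.1 hz
    simp [this, h0]

lemma taylor2 {E : Type*} [NormedAddCommGroup E] [NormedSpace ℝ E] (H : E → ℝ)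
    (hH : ContDiff ℝ (⊤ : ℕ∞) H) (h0 : H 0 = 0) :
    (fun x => H x - fderiv ℝ H 0 x - (1/2) * fderiv ℝ (fderiv ℝ H) 0 x x)
      =O[𝓝 0] fun x => ‖x‖ ^ 3 := by
  have h1 : ContDiff ℝ (⊤ : ℕ∞) (fderiv ℝ H) := hH.fderiv_right (by simp)
  have h2 : ContDiff ℝ (⊤ : ℕ∞) (fderiv ℝ (fderiv ℝ H)) := h1.fderiv_right (by simp)
  have hs := (hH.contDiffAt (x := 0)).isSymmSndFDerivAt (by simp; exact WithTop.coe_le_coe.2 (le_top : (2 : ℕ∞) ≤ ⊤))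
  have d0 : ∀ x, HasFDerivAt H (fderiv ℝ H x) x :=
    fun x => (hH.differentiable (by simp) x).hasFDerivAt
  have d1 : ∀ x, HasFDerivAt (fderiv ℝ H) (fderiv ℝ (fderiv ℝ H) x) x :=
    fun x => (h1.differentiable (by simp) x).hasFDerivAt
  set D := fderiv ℝ H 0
  set Q := fderiv ℝ (fderiv ℝ H) 0
  have s1 : (fun x => fderiv ℝ H x - D - Q x) =O[𝓝 0] fun x => ‖x‖ ^ 2 := by
    refine bigO_of_deriv _ (fun x => fderiv ℝ (fderiv ℝ H) x - Q) 1 ?_ (by simp [D]) ?_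
    · intro x
      exact ((d1 x).sub_const D).sub Q.hasFDerivAt
    · have := (h2.differentiable (by simp) 0).isBigO_sub
      simpa using this.norm_right
  refine bigO_of_deriv _ (fun x => fderiv ℝ H x - D - Q x) 2 ?_ (by simp [h0]) s1
  intro x
  have hq : HasFDerivAt (fun x => Q x x) (Q x + Q.flip x) x := by
    have := Q.hasFDerivAt (x := x) |>.clm_apply (hasFDerivAt_id x)
    refine this.congr_fderiv ?_
    ext u; simp
  refine (((d0 x).sub D.hasFDerivAt).sub (hq.const_mul (1/2))).congr_fderiv ?_
  ext u
  have := hs u x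
  simp only [sub_apply, smul_apply, add_apply, ContinuousLinearMap.flip_apply, smul_eq_mul]
  change _ - _ - (1/2) * (Q x u + Q u x) = _
  rw [show Q u x = Q x u from this]; ring

lemma littleO_of_iter (h : ℝ → ℝ) (hh : ContDiff ℝ (⊤ : ℕ∞) h) (h0 : h 0 = 0) (n : ℕ)
    (hd : ∀ m, 1 ≤ m → m ≤ n → iteratedDeriv m h 0 = 0) : h =o[𝓝 0] fun t => t ^ n := by
  have := taylor_isLittleO_univ (x₀ := 0) (n := n) (hh.of_le (by exact_mod_cast le_top))
  have hz : ∀ x, taylorWithinEval h n Set.univ 0 x = 0 := by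
    intro x
    rw [taylor_within_apply]
    refine Finset.sum_eq_zero fun k hk => ?_
    rw [iteratedDerivWithin_univ]
    rcases Nat.eq_zero_or_pos k with rfl | hk'
    · simp [h0]
    · rw [hd k hk' (by simpa [Nat.lt_succ_iff] using hk)]; simp
  simpa [hz] using this

lemma step (f : ℝ → ℝ) (hf : ContinuousAt f 0) (k m : ℕ) (hkm : k ≤ m)
    (h : (fun t => t ^ k * f t) =o[𝓝 0] fun t : ℝ => t ^ m) : f 0 = 0 := by
  have h1 : (fun t => t ^ k * f t) =o[𝓝 0] fun t : ℝ => t ^ k := by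
    refine h.trans_isBigO ?_
    refine IsBigO.of_bound 1 ?_
    filter_upwards [Metric.ball_mem_nhds (0 : ℝ) one_pos] with t ht
    have : |t| < 1 := by simpa using ht
    simp only [norm_pow, one_mul, Real.norm_eq_abs]
    exact pow_le_pow_of_le_one (abs_nonneg t) this.le hkm
  have h2 : Tendsto f (𝓝[≠] 0) (𝓝 0) := by
    have := (h1.mono (nhdsWithin_le_nhds (s := {0}ᶜ))).tendsto_div_nhds_zero
    refine this.congr' ?_
    filter_upwards [self_mem_nhdsWithin] with t ht
    have : t ≠ 0 := ht
    field_simp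
  exact tendsto_nhds_unique (hf.tendsto.mono_left nhdsWithin_le_nhds) h2

def crv {E : Type*} [NormedAddCommGroup E] [NormedSpace ℝ E] (x y z : E) (c t : ℝ) : E :=
  t ^ 3 • x + (c * t ^ 4) • y - t ^ 2 • z

lemma crv_contDiff {E : Type*} [NormedAddCommGroup E] [NormedSpace ℝ E] (x y z : E) (c : ℝ) :
    ContDiff ℝ (⊤ : ℕ∞) (crv x y z c) := by
  unfold crv; fun_prop

lemma jets {E : Type*} [NormedAddCommGroup E] [NormedSpace ℝ E] (H : E → ℝ)
    (hH : ContDiff ℝ (⊤ : ℕ∞) H) (h0 : H 0 = 0) (x y z : E) (c : ℝ) (m : ℕ) (hm : m ≤ 5)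
    (hd : ∀ k, 1 ≤ k → k ≤ m → iteratedDeriv k (fun t => H (crv x y z c t)) 0 = 0)
    (D : E →L[ℝ] ℝ) (hD : D = fderiv ℝ H 0) (Q : E →L[ℝ] E →L[ℝ] ℝ)
    (hQ : Q = fderiv ℝ (fderiv ℝ H) 0) :
    (fun t => t ^ 2 * (- D z + t * D x + t ^ 2 * (c * D y + (1/2) * Q z z)
      - t ^ 3 * ((1/2) * (Q x z + Q z x)) + t ^ 4 * ((1/2) * Q x x - (1/2) * c * (Q y z + Q z y))
      + t ^ 5 * ((1/2) * c * (Q x y + Q y x)) + t ^ 6 * ((1/2) * c ^ 2 * Q y y)))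
      =o[𝓝 0] fun t : ℝ => t ^ m := by
  have hB := crv_contDiff x y z c
  have hB0 : crv x y z c 0 = 0 := by simp [crv]
  have e1 := littleO_of_iter (fun t => H (crv x y z c t)) (hH.comp hB) (by simp [hB0, h0]) m hd
  have e2 := taylor2 H hH h0
  have hT : Tendsto (crv x y z c) (𝓝 0) (𝓝 0) := by
    have := hB.continuous.tendsto 0
    rwa [hB0] at this
  have e3 := e2.comp_tendsto hT
  have e4 : (crv x y z c) =O[𝓝 0] fun t : ℝ => t ^ 2 := by
    have : ∀ t, crv x y z c t = t ^ 2 • (t • x + (c * t ^ 2) • y - z) := by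
      intro t; simp only [crv, smul_sub, smul_add, smul_smul]; ring_nf
    have h1 : (fun t : ℝ => t • x + (c * t ^ 2) • y - z) =O[𝓝 0] fun _ : ℝ => (1 : ℝ) := by
      refine Tendsto.isBigO_one (c := (0:ℝ) • x + (c * 0 ^ 2) • y - z) ℝ ?_
      refine Continuous.tendsto (by fun_prop) 0
    have := (isBigO_refl (fun t : ℝ => t ^ 2) (𝓝 0)).smul h1
    simp only [smul_eq_mul, mul_one] at this
    refine this.congr_left fun t => ?_
    rw [‹∀ t, crv x y z c t = _› t]
  have e5 : ((fun x => H x - fderiv ℝ H 0 x - (1/2) * fderiv ℝ (fderiv ℝ H) 0 x x) ∘ crv x y z c)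
      =o[𝓝 0] fun t : ℝ => t ^ m := by
    refine e3.trans_isLittleO ?_
    have h6 : (fun t => ‖crv x y z c t‖ ^ 3) =O[𝓝 0] fun t : ℝ => (t ^ 2) ^ 3 := e4.norm_left.pow 3
    refine h6.trans_isLittleO ?_
    simp only [← pow_mul]
    exact isLittleO_pow_pow (by omega)
  refine (e1.sub e5).congr_left fun t => ?_
  simp only [Function.comp, ← hD, ← hQ]
  simp only [crv, map_sub, map_add, map_smul, sub_apply, add_apply, smul_apply, smul_eq_mul]
  ring

lemma jet2 {E : Type*} [NormedAddCommGroup E] [NormedSpace ℝ E] (H : E → ℝ)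
    (hH : ContDiff ℝ (⊤ : ℕ∞) H) (h0 : H 0 = 0) (x y z : E) (c : ℝ)
    (hd : ∀ k, 1 ≤ k → k ≤ 2 → iteratedDeriv k (fun t => H (crv x y z c t)) 0 = 0) :
    fderiv ℝ H 0 z = 0 := by
  have := step _ (by fun_prop) 2 2 le_rfl (jets H hH h0 x y z c 2 (by norm_num) hd _ rfl _ rfl)
  simpa using this

lemma jet5 {E : Type*} [NormedAddCommGroup E] [NormedSpace ℝ E] (H : E → ℝ)
    (hH : ContDiff ℝ (⊤ : ℕ∞) H) (h0 : H 0 = 0) (x y z : E) (c : ℝ)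
    (hd : ∀ k, 1 ≤ k → k ≤ 5 → iteratedDeriv k (fun t => H (crv x y z c t)) 0 = 0) :
    fderiv ℝ H 0 z = 0 ∧ fderiv ℝ H 0 x = 0 ∧
    fderiv ℝ H 0 ((2 * c) • y) = - fderiv ℝ (fderiv ℝ H) 0 z z ∧
    fderiv ℝ (fderiv ℝ H) 0 z x = 0 := by
  have hs := (hH.contDiffAt (x := 0)).isSymmSndFDerivAt (by simp; exact WithTop.coe_le_coe.2 (le_top : (2 : ℕ∞) ≤ ⊤))
  have hs' := hs x z
  have J := jets H hH h0 x y z c 5 (by norm_num) hd _ rfl _ rfl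
  generalize fderiv ℝ H 0 = D at *
  generalize fderiv ℝ (fderiv ℝ H) 0 = Q at *
  have a1 : D z = 0 := by
    have := step _ (by fun_prop) 2 5 (by norm_num) J
    simpa using this
  have a2 : D x = 0 := by
    have := step (fun t => (D x + t * (c * D y + (1/2) * Q z z)
      - t ^ 2 * ((1/2) * (Q x z + Q z x)) + t ^ 3 * ((1/2) * Q x x - (1/2) * c * (Q y z + Q z y))
      + t ^ 4 * ((1/2) * c * (Q x y + Q y x)) + t ^ 5 * ((1/2) * c ^ 2 * Q y y))) (by fun_prop) 3 5 (by norm_num)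
      (J.congr_left fun t => by rw [a1]; ring)
    simpa using this
  have a3 : c * D y + (1/2) * Q z z = 0 := by
    have := step (fun t => ((c * D y + (1/2) * Q z z)
      - t ^ 1 * ((1/2) * (Q x z + Q z x)) + t ^ 2 * ((1/2) * Q x x - (1/2) * c * (Q y z + Q z y))
      + t ^ 3 * ((1/2) * c * (Q x y + Q y x)) + t ^ 4 * ((1/2) * c ^ 2 * Q y y))) (by fun_prop) 4 5 (by norm_num)
      (J.congr_left fun t => by rw [a1, a2]; ring)
    simpa using this
  have a4 : (1/2) * (Q x z + Q z x) = 0 := by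
    have := step (fun t => (
      - ((1/2) * (Q x z + Q z x)) + t ^ 1 * ((1/2) * Q x x - (1/2) * c * (Q y z + Q z y))
      + t ^ 2 * ((1/2) * c * (Q x y + Q y x)) + t ^ 3 * ((1/2) * c ^ 2 * Q y y))) (by fun_prop) 5 5 (by norm_num)
      (J.congr_left fun t => by rw [a1, a2, a3]; ring)
    simp only [ne_eq, one_ne_zero, not_false_eq_true, zero_pow, zero_mul, add_zero, OfNat.ofNat_ne_zero] at this
    linarith
  refine ⟨a1, a2, ?_, ?_⟩
  · simp only [map_smul, smul_eq_mul]; linarith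
  · have : Q x z = Q z x := hs'
    linarith

lemma hasDerivAt_symp {n : ℕ} {u v : ℝ → Fin (2 * n) → ℝ} {u' v' : Fin (2 * n) → ℝ}
    (hu : HasDerivAt u u' 0) (hv : HasDerivAt v v' 0) :
    HasDerivAt (fun s => stdSymp n (u s) (v s)) (stdSymp n u' (v 0) + stdSymp n (u 0) v') 0 := by
  rw [hasDerivAt_pi] at hu hv
  unfold stdSymp
  rw [← Finset.sum_add_distrib]
  refine HasDerivAt.fun_sum fun i _ => ?_
  refine (((hu _).fun_mul (hv _)).fun_sub ((hu _).fun_mul (hv _))).congr_deriv ?_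
  ring

lemma symp_sub_left {n : ℕ} (u u' v : Fin (2 * n) → ℝ) :
    stdSymp n (u - u') v = stdSymp n u v - stdSymp n u' v := by
  unfold stdSymp
  rw [← Finset.sum_sub_distrib]
  exact Finset.sum_congr rfl fun i _ => by simp; ring

lemma symp_sub_right {n : ℕ} (u v v' : Fin (2 * n) → ℝ) :
    stdSymp n u (v - v') = stdSymp n u v - stdSymp n u v' := by
  unfold stdSymp
  rw [← Finset.sum_sub_distrib]
  exact Finset.sum_congr rfl fun i _ => by simp; ring

lemma surj_of_li {n : ℕ} {E : Type*} [NormedAddCommGroup E] [NormedSpace ℝ E]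
    (f : Fin n → E →L[ℝ] ℝ) (hf : LinearIndependent ℝ f) :
    (ContinuousLinearMap.pi f).range = ⊤ := by
  by_contra hne
  obtain ⟨φ, hφ, hle⟩ := Submodule.exists_le_ker_of_lt_top _ (lt_top_iff_ne_top.2 hne)
  apply hφ
  rw [Fintype.linearIndependent_iff] at hf
  have key := hf (fun i => φ (Pi.single i 1)) (by
    ext u
    have : φ (ContinuousLinearMap.pi f u) = 0 := hle ⟨u, rfl⟩
    rw [LinearMap.pi_apply_eq_sum_univ] at this
    simp only [sum_apply, smul_apply, zero_apply, smul_eq_mul]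
    rw [← this]
    refine Finset.sum_congr rfl fun i _ => ?_
    have hsi : (Pi.single i (1 : ℝ) : Fin n → ℝ) = fun j => if i = j then 1 else 0 := by
      ext j; simp [Pi.single_apply, eq_comm]
    rw [hsi, smul_eq_mul, mul_comm]; rfl)
  ext i
  simpa using key i

lemma key {n : ℕ} (L : LagrangianGerm n) (w e₁ e₂ f₁ f₂ : Fin (2 * n) → ℝ)
    (hw : ∀ i, fderiv ℝ (L.H i) 0 w = 0) (he₁ : ∀ i, fderiv ℝ (L.H i) 0 e₁ = 0)
    (he₂ : ∀ i, fderiv ℝ (L.H i) 0 e₂ = 0)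
    (hf₁ : ∀ i, fderiv ℝ (L.H i) 0 f₁ = - fderiv ℝ (fderiv ℝ (L.H i)) 0 w e₁)
    (hf₂ : ∀ i, fderiv ℝ (L.H i) 0 f₂ = - fderiv ℝ (fderiv ℝ (L.H i)) 0 w e₂) :
    stdSymp n f₁ e₂ + stdSymp n e₁ f₂ = 0 := by
  obtain ⟨U, hU, h0U, hL⟩ := L.lagrangian
  obtain ⟨hli, hiso⟩ := hL 0 h0U L.zero_at_zero
  have hsm := L.smooth
  have hdH : ∀ i, ContDiff ℝ (⊤ : ℕ∞) (fderiv ℝ (L.H i)) := fun i => (hsm i).fderiv_right (by simp)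
  set Hv : (Fin (2 * n) → ℝ) → (Fin n → ℝ) := fun x i => L.H i x with hHv
  have hHvs : ContDiff ℝ (⊤ : ℕ∞) Hv := contDiff_pi.2 hsm
  set M : (Fin (2 * n) → ℝ) → ((Fin (2 * n) → ℝ) →L[ℝ] (Fin n → ℝ)) :=
    fun x => ContinuousLinearMap.pi fun i => fderiv ℝ (L.H i) x with hM
  have hHd : ∀ x, HasFDerivAt Hv (M x) x := fun x =>
    hasFDerivAt_pi.2 fun i => ((hsm i).differentiable (by simp) x).hasFDerivAt
  have hMeq : M = fderiv ℝ Hv := funext fun x => (hHd x).fderiv.symm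
  have hMs : ContDiff ℝ (⊤ : ℕ∞) M := by
    rw [hMeq]; exact hHvs.fderiv_right (by simp)
  have hstr : HasStrictFDerivAt Hv (M 0) 0 := by
    rw [hMeq]; exact hHvs.contDiffAt.hasStrictFDerivAt (by simp)
  have hr : (M 0).range = ⊤ := surj_of_li _ hli
  have hHv0 : Hv 0 = 0 := funext fun i => L.zero_at_zero i
  -- a curve in `L` with velocity `w`
  have hwk : w ∈ (M 0).ker := by
    rw [LinearMap.mem_ker]; exact funext hw
  obtain ⟨γ, hγ0, hγd, hγL⟩ : ∃ γ : ℝ → Fin (2 * n) → ℝ, γ 0 = 0 ∧ HasDerivAt γ w 0 ∧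
      ∀ᶠ s in 𝓝 (0 : ℝ), Hv (γ s) = 0 := by
    refine ⟨fun s => hstr.implicitFunction Hv (M 0) hr (Hv 0) (s • ⟨w, hwk⟩), ?_, ?_, ?_⟩
    · simp
    · have h1 := (hstr.to_implicitFunction hr).hasFDerivAt
      have h2 : HasDerivAt (fun s : ℝ => s • (⟨w, hwk⟩ : (M 0).ker)) ⟨w, hwk⟩ 0 := by
        simpa using (hasDerivAt_id (0 : ℝ)).smul_const (⟨w, hwk⟩ : (M 0).ker)
      have h3 := HasFDerivAt.comp_hasDerivAt_of_eq (0 : ℝ) h1 h2 (by simp)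
      exact h3
    · have h1 := hstr.map_implicitFunction_eq hr
      have h2 : Tendsto (fun s : ℝ => (Hv 0, s • (⟨w, hwk⟩ : (M 0).ker))) (𝓝 0) (𝓝 (Hv 0, 0)) := by
        have : Continuous (fun s : ℝ => (Hv 0, s • (⟨w, hwk⟩ : (M 0).ker))) := by fun_prop
        simpa using this.tendsto 0
      filter_upwards [h2.eventually h1] with s hs
      rw [hs]; exact hHv0
  -- right inverse
  obtain ⟨R₀, hR₀⟩ := (M 0).toLinearMap.exists_rightInverse_of_surjective hr
  set R : (Fin n → ℝ) →L[ℝ] (Fin (2 * n) → ℝ) := LinearMap.toContinuousLinearMap R₀ with hR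
  have hMR : (M 0).comp R = 1 := by
    ext1 v
    exact LinearMap.congr_fun hR₀ v
  have hMRs : ContDiff ℝ (⊤ : ℕ∞) (fun x => (M x).comp R) := by fun_prop
  set A : ℝ → ((Fin n → ℝ) →L[ℝ] (Fin n → ℝ)) := fun s => Ring.inverse ((M (γ s)).comp R) with hA
  have hMγ : DifferentiableAt ℝ (fun s => (M (γ s)).comp R) 0 :=
    DifferentiableAt.comp (0 : ℝ) (g := fun x => (M x).comp R)
      (hMRs.differentiable (by simp) _) hγd.differentiableAt
  have hu0 : IsUnit ((M (γ 0)).comp R) := by rw [hγ0, hMR]; exact isUnit_one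
  have hAd : DifferentiableAt ℝ A 0 :=
    DifferentiableAt.comp (0 : ℝ) (g := Ring.inverse) (differentiableAt_inverse hu0) hMγ
  have hA0 : A 0 = 1 := by simp [hA, hγ0, hMR]
  have hunit : ∀ᶠ s in 𝓝 (0 : ℝ), IsUnit ((M (γ s)).comp R) :=
    hMγ.continuousAt.eventually (Units.isOpen.mem_nhds hu0)
  have hγU : ∀ᶠ s in 𝓝 (0 : ℝ), γ s ∈ U :=
    hγd.continuousAt.eventually (by rw [hγ0]; exact hU.mem_nhds h0U)
  -- vector fields
  have field : ∀ e : Fin (2 * n) → ℝ, (∀ i, fderiv ℝ (L.H i) 0 e = 0) →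
      ∃ v : ℝ → Fin (2 * n) → ℝ, v 0 = e ∧
        HasDerivAt v (- R (fun i => fderiv ℝ (fderiv ℝ (L.H i)) 0 w e)) 0 ∧
        ∀ᶠ s in 𝓝 (0 : ℝ), ∀ i, fderiv ℝ (L.H i) (γ s) (v s) = 0 := by
    intro e he
    have hM0e : M 0 e = 0 := funext he
    have hb : HasDerivAt (fun s => M (γ s) e) (fun i => fderiv ℝ (fderiv ℝ (L.H i)) 0 w e) 0 := by
      refine hasDerivAt_pi.2 fun i => ?_
      have h1 : HasFDerivAt (fderiv ℝ (L.H i)) (fderiv ℝ (fderiv ℝ (L.H i)) 0) 0 :=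
        ((hdH i).differentiable (by simp) 0).hasFDerivAt
      have h2 := HasFDerivAt.comp_hasDerivAt_of_eq (0 : ℝ) h1 hγd hγ0.symm
      have h3 := h2.clm_apply (hasDerivAt_const (0 : ℝ) e)
      simp only [map_zero, add_zero] at h3
      exact h3
    refine ⟨fun s => e - R (A s (M (γ s) e)), ?_, ?_, ?_⟩
    · simp [hγ0, hM0e]
    · have h1 := hAd.hasDerivAt.clm_apply hb
      have h2 := (R.hasFDerivAt.comp_hasDerivAt (0 : ℝ) h1).const_sub e
      refine h2.congr_deriv ?_
      simp [hγ0, hM0e, hA0]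
    · filter_upwards [hunit] with s hs i
      have h1 : ((M (γ s)).comp R) * A s = 1 := Ring.mul_inverse_cancel _ hs
      have h2 : M (γ s) (R (A s (M (γ s) e))) = M (γ s) e :=
        congrArg (fun T : (Fin n → ℝ) →L[ℝ] (Fin n → ℝ) => T (M (γ s) e)) h1
      have h3 : M (γ s) (e - R (A s (M (γ s) e))) = 0 := by rw [map_sub, h2, sub_self]
      exact congrFun h3 i
  obtain ⟨v₁, hv₁0, hv₁d, hv₁⟩ := field e₁ he₁
  obtain ⟨v₂, hv₂0, hv₂d, hv₂⟩ := field e₂ he₂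
  have hz : (fun s => stdSymp n (v₁ s) (v₂ s)) =ᶠ[𝓝 0] fun _ => 0 := by
    filter_upwards [hv₁, hv₂, hγU, hγL] with s h1 h2 h3 h4
    exact (hL (γ s) h3 (fun i => congrFun h4 i)).2 _ _ h1 h2
  have hd := (hasDerivAt_symp hv₁d hv₂d).unique ((hasDerivAt_const (0 : ℝ) (0 : ℝ)).congr_of_eventuallyEq hz)
  rw [hv₁0, hv₂0] at hd
  have hMRv : ∀ v i, fderiv ℝ (L.H i) 0 (R v) = v i := fun v i =>
    congrFun (congrArg (fun T : (Fin n → ℝ) →L[ℝ] (Fin n → ℝ) => T v) hMR) i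
  have k1 := hiso (f₁ - (- R (fun i => fderiv ℝ (fderiv ℝ (L.H i)) 0 w e₁))) e₂
    (fun i => by rw [map_sub, map_neg, hMRv, hf₁]; ring) he₂
  have k2 := hiso e₁ (f₂ - (- R (fun i => fderiv ℝ (fderiv ℝ (L.H i)) 0 w e₂))) he₁
    (fun i => by rw [map_sub, map_neg, hMRv, hf₂]; ring)
  rw [symp_sub_left] at k1
  rw [symp_sub_right] at k2
  linarith

lemma vo_gt (g : ℝ → ℝ) (N : ℕ) (h : (N : ℕ∞) < vanishOrder g) (k : ℕ) (hk : 1 ≤ k) (hkN : k ≤ N) :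
    iteratedDeriv k g 0 = 0 := by
  by_contra hne
  have h1 : vanishOrder g ≤ (k : ℕ∞) := sInf_le ⟨k, rfl, hk, hne⟩
  have h2 : (k : ℕ∞) ≤ N := by exact_mod_cast hkN
  exact absurd h (not_lt.2 (h1.trans h2))

lemma vo_ge (g : ℝ → ℝ) (N : ℕ) (h : ∀ k, 1 ≤ k → k < N → iteratedDeriv k g 0 = 0) :
    (N : ℕ∞) ≤ vanishOrder g := by
  refine le_sInf ?_
  rintro _ ⟨k, rfl, hk, hne⟩
  by_contra hlt
  exact hne (h k hk (by exact_mod_cast not_le.1 hlt))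

def ix (m k : ℕ) (hk : k < 4) : Fin (2 * (m + 2)) := ⟨k, by omega⟩

lemma symp_expand (m : ℕ) (u v : Fin (2 * (m + 2)) → ℝ) :
    stdSymp (m + 2) u v =
      (u (ix m 0 (by norm_num)) * v (ix m 1 (by norm_num)) -
        u (ix m 1 (by norm_num)) * v (ix m 0 (by norm_num))) +
      ((u (ix m 2 (by norm_num)) * v (ix m 3 (by norm_num)) -
        u (ix m 3 (by norm_num)) * v (ix m 2 (by norm_num))) +
      ∑ i : Fin m, (u ⟨2 * (i + 2), by omega⟩ * v ⟨2 * (i + 2) + 1, by omega⟩ -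
        u ⟨2 * (i + 2) + 1, by omega⟩ * v ⟨2 * (i + 2), by omega⟩)) := by
  unfold stdSymp
  rw [Fin.sum_univ_succ, Fin.sum_univ_succ]
  rfl

def Hf (m : ℕ) (a b : Fin (2 * (m + 2))) (c σ : ℝ) (i : Fin (m + 2))
    (x : Fin (2 * (m + 2)) → ℝ) : ℝ :=
  if (i : ℕ) = 0 then x (ix m 1 (by norm_num)) - c * (x a * x a)
  else if (i : ℕ) = 1 then x b + 2 * c * σ * (x (ix m 0 (by norm_num)) * x a)
  else x ⟨2 * i, by omega⟩

lemma Hf_smooth (m : ℕ) (a b : Fin (2 * (m + 2))) (c σ : ℝ) (i : Fin (m + 2)) :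
    ContDiff ℝ (⊤ : ℕ∞) (Hf m a b c σ i) := by
  unfold Hf
  split_ifs <;> fun_prop

lemma Hf_fderiv (m : ℕ) (a b : Fin (2 * (m + 2))) (c σ : ℝ) (i : Fin (m + 2))
    (x u : Fin (2 * (m + 2)) → ℝ) : fderiv ℝ (Hf m a b c σ i) x u =
    if (i : ℕ) = 0 then u (ix m 1 (by norm_num)) - 2 * c * x a * u a
    else if (i : ℕ) = 1 then u b + 2 * c * σ * (x (ix m 0 (by norm_num)) * u a
      + u (ix m 0 (by norm_num)) * x a)
    else u ⟨2 * i, by omega⟩ := by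
  have hp : ∀ j, HasFDerivAt (fun x : Fin (2 * (m + 2)) → ℝ => x j)
    (ContinuousLinearMap.proj (R := ℝ) (φ := fun _ => ℝ) j) x := fun j => hasFDerivAt_apply j x
  unfold Hf
  split_ifs
  · rw [((hp _).fun_sub (((hp a).fun_mul (hp a)).const_mul c)).fderiv]
    simp
    ring
  · rw [((hp _).fun_add (((hp _).fun_mul (hp a)).const_mul (2 * c * σ))).fderiv]
    simp
    ring
  · rw [(hp _).fderiv]; simp

def good (m : ℕ) (a b : Fin (2 * (m + 2))) (σ : ℝ) : Prop :=
  ((a : ℕ) = 3 ∧ (b : ℕ) = 2 ∧ σ = 1) ∨ ((a : ℕ) = 2 ∧ (b : ℕ) = 3 ∧ σ = -1)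

lemma exL (m : ℕ) (a b : Fin (2 * (m + 2))) (c σ : ℝ) (hab : good m a b σ) :
    ∃ L : LagrangianGerm (m + 2), L.H = Hf m a b c σ := by
  refine ⟨⟨Hf m a b c σ, Hf_smooth m a b c σ, ?_, Set.univ, isOpen_univ, Set.mem_univ _, ?_⟩, rfl⟩
  · intro i; simp [Hf]
  intro x _ _
  have ha : (a : ℕ) ≠ (b : ℕ) ∧ 2 ≤ (a : ℕ) ∧ 2 ≤ (b : ℕ) ∧ (a : ℕ) < 4 ∧ (b : ℕ) < 4 := by
    rcases hab with ⟨h1, h2, _⟩ | ⟨h1, h2, _⟩ <;> omega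
  obtain ⟨hne, ha2, hb2, ha4, hb4⟩ := ha
  constructor
  · rw [Fintype.linearIndependent_iff]
    intro g hg i
    set k : Fin (2 * (m + 2)) := if (i : ℕ) = 0 then ix m 1 (by norm_num)
      else if (i : ℕ) = 1 then b else ⟨2 * i, by omega⟩ with hk
    have h1 := congrArg (fun T : (Fin (2 * (m + 2)) → ℝ) →L[ℝ] ℝ => T (Pi.single k 1)) hg
    simp only [sum_apply, smul_apply, zero_apply, smul_eq_mul] at h1
    rw [Finset.sum_eq_single i] at h1
    · rw [Hf_fderiv] at h1
      by_cases hi0 : (i : ℕ) = 0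
      · simp only [hk, hi0, if_true, Pi.single_apply, ix, Fin.ext_iff] at h1
        rw [if_neg (by omega)] at h1
        simpa using h1
      · by_cases hi1 : (i : ℕ) = 1
        · simp only [hk, hi0, hi1, one_ne_zero, if_false, if_true, Pi.single_apply, ix, Fin.ext_iff] at h1
          rw [if_neg (by omega), if_neg (by omega)] at h1
          simpa using h1
        · simpa [hk, hi0, hi1] using h1
    · intro j _ hji
      have hji' : (j : ℕ) ≠ i := fun h => hji (Fin.ext h)
      rw [Hf_fderiv]
      have hkv : (k : ℕ) = if (i : ℕ) = 0 then 1 else if (i : ℕ) = 1 then (b : ℕ) else 2 * i := by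
        rw [hk]; split_ifs <;> rfl
      have hka : k ≠ a := by
        intro h
        have := congrArg Fin.val h
        rw [hkv] at this
        split_ifs at this <;> omega
      have hk0 : k ≠ ix m 0 (by norm_num) := by
        intro h
        have : (k : ℕ) = 0 := congrArg Fin.val h
        rw [hkv] at this
        split_ifs at this <;> omega
      have e1 : (Pi.single k (1 : ℝ) : Fin (2 * (m + 2)) → ℝ) a = 0 := by
        simp [Pi.single_apply, hka.symm]
      have e2 : (Pi.single k (1 : ℝ) : Fin (2 * (m + 2)) → ℝ) (ix m 0 (by norm_num)) = 0 := by
        simp [Pi.single_apply, hk0.symm]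
      rw [e1, e2]
      have e3 : ∀ l : Fin (2 * (m + 2)), (l : ℕ) ≠ k →
          (Pi.single k (1 : ℝ) : Fin (2 * (m + 2)) → ℝ) l = 0 := by
        intro l hl
        have : l ≠ k := fun h => hl (congrArg Fin.val h)
        simp [Pi.single_apply, this]
      split_ifs with hj0 hj1
      · rw [e3 _ (by rw [hkv]; simp only [ix]; split_ifs <;> omega)]; simp
      · rw [e3 _ (by rw [hkv]; split_ifs <;> omega)]; simp
      · rw [e3 _ (by rw [hkv]; simp only; split_ifs <;> omega)]; simp
    · simp
  · intro u v hu hv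
    have hu' := fun i => (Hf_fderiv m a b c σ i x u).symm.trans (hu i)
    have hv' := fun i => (Hf_fderiv m a b c σ i x v).symm.trans (hv i)
    have hu0 := hu' 0
    have hv0 := hv' 0
    have hu1 := hu' 1
    have hv1 := hv' 1
    have n1 : ((1 : Fin (m + 2)) : ℕ) = 1 := by simp
    simp only [Fin.val_zero, if_true] at hu0 hv0
    simp only [n1, one_ne_zero, if_false, if_true] at hu1 hv1
    rw [symp_expand, Finset.sum_eq_zero, add_zero]
    · rcases hab with ⟨h1, h2, h3⟩ | ⟨h1, h2, h3⟩
      · obtain rfl : a = ix m 3 (by norm_num) := Fin.ext h1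
        obtain rfl : b = ix m 2 (by norm_num) := Fin.ext h2
        subst h3
        rw [eq_of_sub_eq_zero hu0, eq_of_sub_eq_zero hv0, eq_neg_of_add_eq_zero_left hu1,
          eq_neg_of_add_eq_zero_left hv1]
        ring
      · obtain rfl : a = ix m 2 (by norm_num) := Fin.ext h1
        obtain rfl : b = ix m 3 (by norm_num) := Fin.ext h2
        subst h3
        rw [eq_of_sub_eq_zero hu0, eq_of_sub_eq_zero hv0, eq_neg_of_add_eq_zero_left hu1,
          eq_neg_of_add_eq_zero_left hv1]
        ring
    · intro i _
      have h1 := hu' i.succ.succ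
      have h2 := hv' i.succ.succ
      simp only [Fin.val_succ, Nat.add_eq_zero_iff, one_ne_zero, and_false, if_false,
        Nat.add_eq_right, Nat.add_eq_zero_iff] at h1 h2
      have h1' : u ⟨2 * (i + 2), by omega⟩ = 0 := h1
      have h2' : v ⟨2 * (i + 2), by omega⟩ = 0 := h2
      rw [h1', h2']; ring

def cur (m : ℕ) (a : Fin (2 * (m + 2))) (c : ℝ) : ℝ → Fin (2 * (m + 2)) → ℝ :=
  crv (Pi.single (ix m 0 (by norm_num)) 1) (Pi.single (ix m 1 (by norm_num)) 1) (Pi.single a 1) c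

lemma Hf_cur (m : ℕ) (a b : Fin (2 * (m + 2))) (c σ : ℝ) (hab : good m a b σ) (i : Fin (m + 2))
    (t : ℝ) : Hf m a b c σ i (cur m a c t) = if (i : ℕ) = 1 then (- (2 * c * σ)) * t ^ 5 else 0 := by
  have ha : (a : ℕ) ≠ (b : ℕ) ∧ 2 ≤ (a : ℕ) ∧ 2 ≤ (b : ℕ) ∧ (a : ℕ) < 4 ∧ (b : ℕ) < 4 := by
    rcases hab with ⟨h1, h2, _⟩ | ⟨h1, h2, _⟩ <;> omega
  obtain ⟨hne, ha2, hb2, ha4, hb4⟩ := ha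
  have E : ∀ l, cur m a c t l = if (l : ℕ) = 0 then t ^ 3 else if (l : ℕ) = 1 then c * t ^ 4
      else if (l : ℕ) = a then - t ^ 2 else 0 := by
    intro l
    simp only [cur, crv, Pi.sub_apply, Pi.add_apply, Pi.smul_apply, Pi.single_apply, ix,
      Fin.ext_iff, smul_eq_mul]
    split_ifs <;> first | omega | simp
  unfold Hf
  simp only [E, ix]
  have i2 := i.2
  split_ifs <;> first | contradiction | omega | (ring_nf; done)

lemma upper (m : ℕ) (a b : Fin (2 * (m + 2))) (c σ : ℝ) (hab : good m a b σ) (hc : c ≠ 0) :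
    Lt1 (cur m a c) ≤ 5 := by
  refine iSup_le fun L => ?_
  by_contra hlt
  rw [not_le] at hlt
  have hd : ∀ i, ∀ k, 1 ≤ k → k ≤ 5 → iteratedDeriv k (fun t => L.H i (cur m a c t)) 0 = 0 :=
    fun i => vo_gt _ 5 (lt_of_lt_of_le hlt (iInf_le _ i))
  have J := fun i => jet5 (L.H i) (L.smooth i) (L.zero_at_zero i) _ _ _ c (hd i)
  have K := key L _ _ _ _ 0 (fun i => (J i).1) (fun i => (J i).1) (fun i => (J i).2.1)
    (fun i => (J i).2.2.1) (fun i => by rw [(J i).2.2.2]; simp)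
  rw [symp_expand, symp_expand] at K
  have h2 : 2 ≤ (a : ℕ) ∧ (a : ℕ) < 4 := by
    rcases hab with ⟨h1, h2, _⟩ | ⟨h1, h2, _⟩ <;> omega
  simp [Pi.single_apply, ix] at K
  exact hc K

lemma lower (m : ℕ) (a b : Fin (2 * (m + 2))) (c σ : ℝ) (hab : good m a b σ) :
    5 ≤ Lt1 (cur m a c) := by
  obtain ⟨L, hL⟩ := exL m a b c σ hab
  refine le_trans ?_ (le_iSup _ L)
  refine le_iInf fun i => vo_ge _ 5 fun k hk hk5 => ?_
  simp only [hL, Hf_cur m a b c σ hab]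
  by_cases h : (i : ℕ) = 1
  · simp only [h, if_true]
    rw [iteratedDeriv_const_mul_field]
    interval_cases k <;> simp [iteratedDeriv_succ]
  · simp [h]

lemma top' (m : ℕ) (a b : Fin (2 * (m + 2))) (σ : ℝ) (hab : good m a b σ) :
    Lt1 (cur m a 0) = ⊤ := by
  obtain ⟨L, hL⟩ := exL m a b 0 σ hab
  rw [eq_top_iff]
  refine le_trans ?_ (le_iSup _ L)
  refine le_iInf fun i => le_sInf ?_
  rintro _ ⟨k, rfl, hk, hne⟩
  exfalso; apply hne
  simp only [hL, Hf_cur m a b 0 σ hab]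
  simp

lemma two_le (m : ℕ) (a : Fin (2 * (m + 2))) (c : ℝ) (L : LagrangianGerm (m + 2)) :
    2 ≤ tOrd (cur m a c) L := by
  refine le_iInf fun i => vo_ge _ 2 fun k hk hk2 => ?_
  obtain rfl : k = 1 := by omega
  rw [iteratedDeriv_one]
  have h1 : HasDerivAt (cur m a c) 0 0 := by
    unfold cur crv
    have h := fun k : ℕ => (hasDerivAt_pow k (0 : ℝ))
    refine ((((h 3).smul_const _).fun_add (((h 4).const_mul c).smul_const _)).fun_sub
      ((h 2).smul_const _)).congr_deriv ?_
    simp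
  have h2 := ((L.smooth i).differentiable (by simp) (cur m a c 0)).hasFDerivAt
  have := (h2.comp_hasDerivAt (0 : ℝ) h1).deriv
  rw [map_zero] at this
  exact this

lemma Lt2_eq (m : ℕ) (c₁ c₂ : ℝ) :
    Lt2 (cur m (ix m 3 (by norm_num)) c₁) (cur m (ix m 2 (by norm_num)) c₂) = 2 := by
  apply le_antisymm
  · refine iSup_le fun L => ?_
    by_contra hlt
    rw [not_le, lt_min_iff] at hlt
    have J1 := fun i => jet2 (L.H i) (L.smooth i) (L.zero_at_zero i) _ _ _ c₁
      (vo_gt _ 2 (lt_of_lt_of_le hlt.1 (iInf_le _ i)))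
    have J2 := fun i => jet2 (L.H i) (L.smooth i) (L.zero_at_zero i) _ _ _ c₂
      (vo_gt _ 2 (lt_of_lt_of_le hlt.2 (iInf_le _ i)))
    obtain ⟨U, hU, h0U, hL⟩ := L.lagrangian
    have K := (hL 0 h0U L.zero_at_zero).2 _ _ J1 J2
    rw [symp_expand] at K
    simp [Pi.single_apply, ix] at K
  · obtain ⟨L, hL⟩ := exL m (ix m 3 (by norm_num)) (ix m 2 (by norm_num)) 0 1 (Or.inl ⟨rfl, rfl, rfl⟩)
    refine le_trans ?_ (le_iSup _ L)
    exact le_min (two_le _ _ _ _) (two_le _ _ _ _)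

lemma cur_eq (m k : ℕ) (hk : k < 4) (hk2 : 2 ≤ k) (c : ℝ) :
    (fun (t : ℝ) (j : Fin (2 * (m + 2))) => if (j : ℕ) = 0 then t ^ 3 else if (j : ℕ) = 1 then c * t ^ 4
      else if (j : ℕ) = k then -t ^ 2 else (0 : ℝ)) = cur m (ix m k hk) c := by
  funext t l
  simp only [cur, crv, Pi.sub_apply, Pi.add_apply, Pi.smul_apply, Pi.single_apply, ix,
      Fin.ext_iff, smul_eq_mul]
  split_ifs <;> first | omega | simp

end T7aux

/-- Lagrangian tangency orders for the class `(T₇)²`. -/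
theorem T7_2_lagrangian_tangency_orders
    (n : ℕ) (hn : 2 ≤ n) (c₁ c₂ : ℝ) (hc : (c₁, c₂) ≠ (0, 0))
    (B₁ B₂ : ℝ → Fin (2 * n) → ℝ)
    (hB₁ : B₁ = fun (t : ℝ) (j : Fin (2 * n)) => if (j : ℕ) = 0 then t ^ 3 else if (j : ℕ) = 1 then (c₁ ^ 2 / 2) * t ^ 4 else if (j : ℕ) = 3 then -t ^ 2 else (0 : ℝ))
    (hB₂ : B₂ = fun (t : ℝ) (j : Fin (2 * n)) => if (j : ℕ) = 0 then t ^ 3 else if (j : ℕ) = 1 then (c₂ ^ 2 / 2) * t ^ 4 else if (j : ℕ) = 2 then -t ^ 2 else (0 : ℝ)) :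
    Lt2 B₁ B₂ = 2 ∧
    (c₁ ≠ 0 → Lt1 B₁ = 5) ∧ (c₁ = 0 → Lt1 B₁ = ⊤) ∧
    (c₂ ≠ 0 → Lt1 B₂ = 5) ∧ (c₂ = 0 → Lt1 B₂ = ⊤) := by
  obtain ⟨m, rfl⟩ : ∃ m, n = m + 2 := ⟨n - 2, by omega⟩
  rw [T7aux.cur_eq m 3 (by norm_num) (by norm_num)] at hB₁
  rw [T7aux.cur_eq m 2 (by norm_num) (by norm_num)] at hB₂
  subst hB₁ hB₂
  have g1 : T7aux.good m (T7aux.ix m 3 (by norm_num)) (T7aux.ix m 2 (by norm_num)) 1 :=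
    Or.inl ⟨rfl, rfl, rfl⟩
  have g2 : T7aux.good m (T7aux.ix m 2 (by norm_num)) (T7aux.ix m 3 (by norm_num)) (-1) :=
    Or.inr ⟨rfl, rfl, rfl⟩
  refine ⟨T7aux.Lt2_eq m _ _, fun h => ?_, fun h => ?_, fun h => ?_, fun h => ?_⟩
  · exact le_antisymm (T7aux.upper m _ _ _ _ g1 (by positivity)) (T7aux.lower m _ _ _ _ g1)
  · subst h
    rw [show (0 : ℝ) ^ 2 / 2 = 0 by norm_num]
    exact T7aux.top' m _ _ _ g1
  · exact le_antisymm (T7aux.upper m _ _ _ _ g2 (by positivity)) (T7aux.lower m _ _ _ _ g2)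
  · subst h
    rw [show (0 : ℝ) ^ 2 / 2 = 0 by norm_num]
    exact T7aux.top' m _ _ _ g2

end
end

section
/- Let n ≥ 3 and let c₁, c₂ ∈ ℝ. Consider the two curve-germs in ℝ^{2n} (coordinates (p₁,q₁,p₂,q₂,p₃,q₃,…,pₙ,qₙ), all unlisted coordinates equal to 0): B₁(t) = (t³, (1/2)t⁴, 0, c₂t⁵, −t², 0, …, 0) and B₂(t) = (t³, (c₁/2)t⁴, −t², 0, 0, 0, …, 0) (the class (T₇)³). Then Lt(B₁,B₂) = 5 and Lt(B₁) = 5; moreover Lt(B₂) = 5 if c₁ ≠ 0 and Lt(B₂) = ∞ if c₁ = 0. -/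
noncomputable section

open Asymptotics Filter Topology in
theorem aux_bigO_of_fderiv {E F : Type*} [NormedAddCommGroup E] [NormedSpace ℝ E]
    [NormedAddCommGroup F] [NormedSpace ℝ F] (g : E → F) (hg : Differentiable ℝ g) (h0 : g 0 = 0)
    (k : ℕ) (h : (fderiv ℝ g) =O[𝓝 0] (fun x => ‖x‖ ^ k)) :
    g =O[𝓝 0] (fun x => ‖x‖ ^ (k + 1)) := by
  obtain ⟨C, hC⟩ := h.bound
  obtain ⟨r, hr, hb⟩ := Metric.eventually_nhds_iff_ball.1 hC
  refine IsBigO.of_bound C ?_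
  filter_upwards [Metric.ball_mem_nhds (0 : E) hr] with x hx
  have hC0 : 0 ≤ C * ‖x‖ ^ k := by
    have := hb x hx
    rw [norm_pow, norm_norm] at this
    exact (norm_nonneg _).trans this
  have key := Convex.norm_image_sub_le_of_norm_fderiv_le (𝕜 := ℝ) (f := g) (C := C * ‖x‖ ^ k)
    (s := Metric.closedBall (0 : E) ‖x‖) (x := 0) (y := x)
    (fun y _ => hg y) (fun y hy => ?_) (convex_closedBall _ _) (by simp) (by simp)
  · rw [h0, sub_zero, sub_zero] at key
    rw [norm_pow, norm_norm, pow_succ, ← mul_assoc]; exact key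
  · have hy' : ‖y‖ ≤ ‖x‖ := by simpa using hy
    have hxr : ‖x‖ < r := by simpa using hx
    have h1 := hb y (by simpa using lt_of_le_of_lt hy' hxr)
    rw [norm_pow, norm_norm] at h1
    rcases le_or_gt 0 C with hc | hc
    · exact h1.trans (by gcongr)
    · have h2 : ‖x‖ ^ k ≤ 0 := by nlinarith [pow_nonneg (norm_nonneg x) k]
      have h3 : ‖y‖ ^ k ≤ ‖x‖ ^ k := by gcongr
      have h4 : ‖y‖ ^ k = 0 := le_antisymm (h3.trans h2) (by positivity)
      have h5 : ‖x‖ ^ k = 0 := le_antisymm h2 (by positivity)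
      rw [h5, ← h4]; exact h1

open Asymptotics Filter Topology in
theorem aux_bigO_of_iteratedDeriv (N : ℕ) : ∀ (h : ℝ → ℝ), ContDiff ℝ (⊤ : ℕ∞) h →
    (∀ k < N, iteratedDeriv k h 0 = 0) → h =O[𝓝 0] (fun t => ‖t‖ ^ N) := by
  induction N with
  | zero =>
    intro h hh _
    simpa using hh.continuous.continuousAt.norm.isBoundedUnder_le.isBigO_one ℝ
  | succ N ih =>
    intro h hh hk
    have hd : ContDiff ℝ (⊤ : ℕ∞) (deriv h) := by
      have := (contDiff_infty_iff_deriv (f := h)).1 hh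
      exact this.2
    have h1 := ih (deriv h) hd (fun k hkN => by
      have := hk (k + 1) (by omega)
      rwa [iteratedDeriv_succ'] at this)
    refine aux_bigO_of_fderiv h (hh.differentiable (by simp)) (by simpa using hk 0 (by omega)) N ?_
    refine IsBigO.trans (IsBigO.of_bound 1 ?_) h1
    filter_upwards with x
    rw [norm_deriv_eq_norm_fderiv, one_mul]

open Asymptotics Filter Topology in
theorem aux_taylor_s7 {V : Type*} [NormedAddCommGroup V] [NormedSpace ℝ V]
    (A : V → ℝ) (hA : ContDiff ℝ (⊤ : ℕ∞) A) (h0 : A 0 = 0) :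
    (fun x => A x - fderiv ℝ A 0 x - (1 / 2) * fderiv ℝ (fderiv ℝ A) 0 x x)
      =O[𝓝 0] (fun x => ‖x‖ ^ 3) := by
  have hA1 : ContDiff ℝ (⊤ : ℕ∞) (fderiv ℝ A) := hA.fderiv_right (by simp)
  have hA2 : ContDiff ℝ (⊤ : ℕ∞) (fderiv ℝ (fderiv ℝ A)) := hA1.fderiv_right (by simp)
  have d0 : Differentiable ℝ A := hA.differentiable (by simp)
  have d1 : Differentiable ℝ (fderiv ℝ A) := hA1.differentiable (by simp)
  have d2 : Differentiable ℝ (fderiv ℝ (fderiv ℝ A)) := hA2.differentiable (by simp)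
  have sym : ∀ u v, fderiv ℝ (fderiv ℝ A) 0 u v = fderiv ℝ (fderiv ℝ A) 0 v u := by
    intro u v
    exact second_derivative_symmetric (f := A) (f' := fderiv ℝ A) (x := 0)
      (fun y => (d0 y).hasFDerivAt) (d1 0).hasFDerivAt u v
  set D := fderiv ℝ (fderiv ℝ A) 0 with hD
  have e1 : ∀ x, HasFDerivAt (fun x => fderiv ℝ A x - fderiv ℝ A 0 - D x)
      (fderiv ℝ (fderiv ℝ A) x - D) x := fun x =>
    ((d1 x).hasFDerivAt.sub_const _).sub D.hasFDerivAt
  have b1 : (fun x => fderiv ℝ A x - fderiv ℝ A 0 - D x) =O[𝓝 0] (fun x => ‖x‖ ^ 2) := by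
    refine aux_bigO_of_fderiv _ (fun x => (e1 x).differentiableAt) (by simp) 1 ?_
    have := HasFDerivAt.isBigO_sub (𝕜 := ℝ) (E := V) (F := V →L[ℝ] V →L[ℝ] ℝ) (d2 0).hasFDerivAt
    simp only [sub_zero] at this
    have e : fderiv ℝ (fun x => fderiv ℝ A x - fderiv ℝ A 0 - D x)
      = fun x => fderiv ℝ (fderiv ℝ A) x - D := funext fun x => (e1 x).fderiv
    rw [e]
    simpa using this.norm_right
  have e2 : ∀ x, HasFDerivAt (fun x => A x - fderiv ℝ A 0 x - (1 / 2) * D x x)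
      (fderiv ℝ A x - fderiv ℝ A 0 - D x) x := by
    intro x
    have h1 := ((d0 x).hasFDerivAt.sub (fderiv ℝ A 0).hasFDerivAt).sub
      ((D.hasFDerivAt.clm_apply (hasFDerivAt_id x)).const_mul (1 / 2))
    refine h1.congr_fderiv ?_
    ext v
    simp
    rw [sym v x]; ring
  refine aux_bigO_of_fderiv _ (fun x => (e2 x).differentiableAt) (by simp [h0]) 2 ?_
  rw [show fderiv ℝ (fun x => A x - fderiv ℝ A 0 x - (1 / 2) * D x x)
      = fun x => fderiv ℝ A x - fderiv ℝ A 0 - D x from funext fun x => (e2 x).fderiv]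
  exact b1

open Asymptotics Filter Topology in
theorem aux_coef_s7 (c : ℝ) (k : ℕ) (h : (fun t : ℝ => c * t ^ k) =O[𝓝 0] (fun t => t ^ (k + 1))) :
    c = 0 := by
  by_contra hc
  obtain ⟨C, hC⟩ := h.bound
  have h1 : ∀ᶠ t : ℝ in 𝓝[≠] 0, |c| ≤ C * |t| := by
    filter_upwards [hC.filter_mono nhdsWithin_le_nhds, self_mem_nhdsWithin] with t ht ht0
    have hp : 0 < |t| ^ k := pow_pos (abs_pos.2 ht0) k
    simp only [norm_mul, norm_pow, Real.norm_eq_abs, pow_succ] at ht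
    refine le_of_mul_le_mul_right ?_ hp
    linarith
  have h2 : Tendsto (fun t : ℝ => C * |t|) (𝓝[≠] 0) (𝓝 0) := by
    have : Tendsto (fun t : ℝ => C * |t|) (𝓝 0) (𝓝 (C * |0|)) :=
      (by fun_prop : Continuous fun t : ℝ => C * |t|).tendsto 0
    simp only [abs_zero, mul_zero] at this
    exact this.mono_left nhdsWithin_le_nhds
  have := ge_of_tendsto h2 h1
  exact hc (abs_eq_zero.1 (le_antisymm this (abs_nonneg c)))

open Asymptotics Filter Topology in
theorem aux_mul_pow (g : ℝ → ℝ) (hg : Continuous g) (a b : ℕ) (hab : b ≤ a) :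
    (fun t : ℝ => t ^ a * g t) =O[𝓝 0] (fun t => t ^ b) := by
  obtain ⟨c, rfl⟩ := Nat.exists_eq_add_of_le hab
  have : (fun t : ℝ => t ^ c * g t) =O[𝓝 0] (fun _ => (1:ℝ)) :=
    (by fun_prop : Continuous fun t : ℝ => t ^ c * g t).continuousAt.norm.isBoundedUnder_le.isBigO_one ℝ
  have h2 := (isBigO_refl (fun t : ℝ => t ^ b) (𝓝 0)).mul this
  refine (h2.congr_left ?_).congr_right ?_
  · intro t; ring
  · intro t; ring

open Asymptotics Filter Topology in
theorem aux_coefs (c2 c3 c4 c5 : ℝ)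
    (h : (fun t : ℝ => c2 * t ^ 2 + c3 * t ^ 3 + c4 * t ^ 4 + c5 * t ^ 5) =O[𝓝 0]
      (fun t => t ^ 6)) : c2 = 0 ∧ c3 = 0 ∧ c4 = 0 ∧ c5 = 0 := by
  have lift : ∀ b ≤ 6, (fun t : ℝ => t ^ 6) =O[𝓝 0] (fun t => t ^ b) := fun b hb => by
    simpa using aux_mul_pow (fun _ => 1) continuous_const 6 b hb
  have z2 : c2 = 0 := by
    refine aux_coef_s7 c2 2 ?_
    refine ((h.trans (lift 3 (by norm_num))).sub
      (aux_mul_pow (fun t => c3 + c4 * t + c5 * t ^ 2) (by fun_prop) 3 3 le_rfl)).congr_left ?_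
    intro t; ring
  have z3 : c3 = 0 := by
    refine aux_coef_s7 c3 3 ?_
    refine ((h.trans (lift 4 (by norm_num))).sub
      (aux_mul_pow (fun t => c4 + c5 * t) (by fun_prop) 4 4 le_rfl)).congr_left ?_
    intro t; rw [z2]; ring
  have z4 : c4 = 0 := by
    refine aux_coef_s7 c4 4 ?_
    refine ((h.trans (lift 5 (by norm_num))).sub
      (aux_mul_pow (fun t => c5) (by fun_prop) 5 5 le_rfl)).congr_left ?_
    intro t; rw [z2, z3]; ring
  have z5 : c5 = 0 := by
    refine aux_coef_s7 c5 5 (h.congr_left ?_)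
    intro t; rw [z2, z3, z4]; ring
  exact ⟨z2, z3, z4, z5⟩

open Asymptotics Filter Topology in
/-- Low-order relations coming from tangency of order at least six. -/
theorem aux_relations {V : Type*} [NormedAddCommGroup V] [NormedSpace ℝ V]
    (A : V → ℝ) (hA : ContDiff ℝ (⊤ : ℕ∞) A) (h0 : A 0 = 0) (P Q R S : V) (f : ℝ → V)
    (hf : ∀ t, f t = t ^ 2 • (-P) + t ^ 3 • Q + t ^ 4 • R + t ^ 5 • S)
    (hh : (fun t => A (f t)) =O[𝓝 0] (fun t => t ^ 6)) :
    fderiv ℝ A 0 P = 0 ∧ fderiv ℝ A 0 Q = 0 ∧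
    fderiv ℝ A 0 R + (1 / 2) * fderiv ℝ (fderiv ℝ A) 0 P P = 0 ∧
    fderiv ℝ A 0 S - fderiv ℝ (fderiv ℝ A) 0 P Q = 0 := by
  have hA1 : ContDiff ℝ (⊤ : ℕ∞) (fderiv ℝ A) := hA.fderiv_right (by simp)
  have d0 : Differentiable ℝ A := hA.differentiable (by simp)
  have d1 : Differentiable ℝ (fderiv ℝ A) := hA1.differentiable (by simp)
  have sym : ∀ u v, fderiv ℝ (fderiv ℝ A) 0 u v = fderiv ℝ (fderiv ℝ A) 0 v u := by
    intro u v
    exact second_derivative_symmetric (f := A) (f' := fderiv ℝ A) (x := 0)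
      (fun y => (d0 y).hasFDerivAt) (d1 0).hasFDerivAt u v
  have hfc : Continuous f := by
    rw [show f = _ from funext hf]; fun_prop
  have hf0 : f 0 = 0 := by simp [hf]
  have ft : Tendsto f (𝓝 0) (𝓝 0) := by simpa [hf0] using hfc.tendsto 0
  have hfO : f =O[𝓝 0] (fun t : ℝ => t ^ 2) := by
    have hg : Continuous (fun t : ℝ => -P + t • Q + t ^ 2 • R + t ^ 3 • S) := by fun_prop
    have h1 : (fun t : ℝ => -P + t • Q + t ^ 2 • R + t ^ 3 • S) =O[𝓝 0] (fun _ => (1 : ℝ)) :=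
      hg.continuousAt.norm.isBoundedUnder_le.isBigO_one ℝ
    refine (((isBigO_refl (fun t : ℝ => t ^ 2) (𝓝 0)).smul h1).congr_left ?_).congr_right ?_
    · intro t; rw [hf]; module
    · intro t; simp
  have T := (aux_taylor_s7 A hA h0).comp_tendsto ft
  have hfO3 : (fun t => ‖f t‖ ^ 3) =O[𝓝 0] (fun t : ℝ => t ^ 6) :=
    (hfO.norm_left.pow 3).congr_right (fun t => by ring)
  have T2 := hh.sub (T.trans hfO3)
  set D := fderiv ℝ (fderiv ℝ A) 0 with hD
  set a := fderiv ℝ A 0 with ha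
  have T3 := T2.sub (aux_mul_pow (fun t => (1/2) * (D Q Q) - D P R
      + t * (D Q R - D P S) + t ^ 2 * ((1/2) * D R R + D Q S) + t ^ 3 * (D R S)
      + t ^ 4 * ((1/2) * D S S)) (by fun_prop) 6 6 le_rfl)
  have := aux_coefs (-(a P)) (a Q) (a R + (1/2) * D P P) (a S - D P Q) (T3.congr_left ?_)
  · exact ⟨by linarith [this.1], this.2⟩
  · intro t
    simp only [Function.comp, hf, map_add, map_smul, map_neg, _root_.add_apply,
      _root_.smul_apply, _root_.neg_apply, smul_eq_mul]
    rw [sym Q P, sym R P, sym S P, sym R Q, sym S Q, sym S R]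
    ring

/-- Linear algebra: the symplectic gradients lie in the (Lagrangian) kernel. -/
theorem aux_linalg {V : Type*} [AddCommGroup V] [Module ℝ V] [FiniteDimensional ℝ V] (n : ℕ)
    (hdim : Module.finrank ℝ V = 2 * n) (Ω : V ≃ₗ[ℝ] Module.Dual ℝ V)
    (φ : Fin n → Module.Dual ℝ V) (hφ : LinearIndependent ℝ φ)
    (hK : ∀ u v, (∀ i, φ i u = 0) → (∀ i, φ i v = 0) → Ω u v = 0) (i j : Fin n) :
    φ j (Ω.symm (φ i)) = 0 := by
  set K : Submodule ℝ V := ⨅ i, LinearMap.ker (φ i) with hKdef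
  have memK : ∀ v, v ∈ K ↔ ∀ i, φ i v = 0 := by
    intro v; simp [hKdef, Submodule.mem_iInf]
  have hle : K.map Ω.toLinearMap ≤ Submodule.span ℝ (Set.range φ) := by
    rintro _ ⟨k, hk, rfl⟩
    refine mem_span_of_iInf_ker_le_ker (fun v hv => ?_)
    exact hK k v ((memK k).1 hk) ((memK v).1 hv)
  have hker : K = LinearMap.ker (LinearMap.pi φ) := by
    ext v; rw [memK, LinearMap.mem_ker]; exact funext_iff.symm
  have hrn := LinearMap.finrank_range_add_finrank_ker (LinearMap.pi φ)
  have hrange : Module.finrank ℝ (LinearMap.range (LinearMap.pi φ)) ≤ n := by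
    simpa using Submodule.finrank_le (LinearMap.range (LinearMap.pi φ))
  have hfin : n ≤ Module.finrank ℝ K := by rw [hker]; omega
  have hspan : Module.finrank ℝ (Submodule.span ℝ (Set.range φ)) = n := by
    simpa using finrank_span_eq_card hφ
  have heq : K.map Ω.toLinearMap = Submodule.span ℝ (Set.range φ) := by
    refine Submodule.eq_of_le_of_finrank_le hle ?_
    rw [hspan, LinearEquiv.finrank_map_eq Ω K]; exact hfin
  have : φ i ∈ K.map Ω.toLinearMap := by
    rw [heq]; exact Submodule.subset_span ⟨i, rfl⟩
  obtain ⟨k, hk, hki⟩ := this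
  have : Ω.symm (φ i) = k := by rw [← hki]; simp
  rw [this]; exact (memK k).1 hk j

/-- A linearly independent family of `n` functionals is jointly surjective. -/
theorem aux_surj_s7 {V : Type*} [AddCommGroup V] [Module ℝ V] [FiniteDimensional ℝ V] (n : ℕ)
    (φ : Fin n → Module.Dual ℝ V) (hφ : LinearIndependent ℝ φ) :
    LinearMap.range (LinearMap.pi φ) = ⊤ := by
  rw [LinearMap.range_eq_top]
  by_contra hs
  rw [← LinearMap.range_eq_top] at hs
  obtain ⟨g, hg0, hg⟩ := Submodule.exists_dual_map_eq_bot_of_lt_top (lt_top_iff_ne_top.2 hs)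
    inferInstance
  apply hg0
  have hz : ∀ v, g (fun i => φ i v) = 0 := by
    intro v
    have : g (fun i => φ i v) ∈ (LinearMap.range (LinearMap.pi φ)).map g :=
      ⟨_, ⟨v, rfl⟩, rfl⟩
    rw [hg] at this
    simpa using this
  have h2 : ∀ y : Fin n → ℝ, g y = ∑ i, g (Pi.single i 1) * y i := by
    intro y
    rw [LinearMap.pi_apply_eq_sum_univ g y]
    refine Finset.sum_congr rfl (fun i _ => ?_)
    rw [smul_eq_mul, mul_comm]
    congr 2
    ext j; simp [Pi.single_apply, eq_comm]
  have h3 := Fintype.linearIndependent_iff.1 hφ (fun i => g (Pi.single i 1)) (by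
    ext v
    have := hz v
    rw [h2] at this
    simpa using this)
  ext i
  simpa using h3 i

open Asymptotics Filter Topology in
theorem aux_core {V : Type*} [NormedAddCommGroup V] [NormedSpace ℝ V] [FiniteDimensional ℝ V]
    (n : ℕ) (hdim : Module.finrank ℝ V = 2 * n) (Ω : V →ₗ[ℝ] Module.Dual ℝ V)
    (alt : ∀ u v, Ω u v = - Ω v u) (nondeg : ∀ u, (∀ v, Ω u v = 0) → u = 0)
    (H : Fin n → V → ℝ) (smooth : ∀ i, ContDiff ℝ (⊤ : ℕ∞) (H i)) (H0 : ∀ i, H i 0 = 0)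
    (U : Set V) (hU : IsOpen U) (h0U : 0 ∈ U)
    (lag : ∀ x ∈ U, (∀ i, H i x = 0) →
      LinearIndependent ℝ (fun i => fderiv ℝ (H i) x) ∧
      ∀ u v : V, (∀ i, fderiv ℝ (H i) x u = 0) →
        (∀ i, fderiv ℝ (H i) x v = 0) → Ω u v = 0)
    (P Q R S : V) (f : ℝ → V)
    (hf : ∀ t, f t = t ^ 2 • (-P) + t ^ 3 • Q + t ^ 4 • R + t ^ 5 • S)
    (hh : ∀ i, (fun t => H i (f t)) =O[𝓝 0] (fun t => t ^ 6))
    (hPS : Ω P S = 0) (hQR : Ω Q R ≠ 0) : False := by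
  have hinj : Function.Injective Ω := by
    rw [injective_iff_map_eq_zero]
    intro u hu
    exact nondeg u (fun v => by rw [hu]; rfl)
  let Ωe : V ≃ₗ[ℝ] Module.Dual ℝ V :=
    LinearEquiv.ofInjectiveOfFinrankEq Ω hinj (Subspace.dual_finrank_eq).symm
  have hΩe : ∀ u v, Ωe u v = Ω u v := fun u v => rfl
  have hdH : ∀ i, Differentiable ℝ (H i) := fun i => (smooth i).differentiable (by simp)
  -- linear independence as linear maps
  have indep : ∀ x, LinearIndependent ℝ (fun i => fderiv ℝ (H i) x) →
      LinearIndependent ℝ (fun i => ((fderiv ℝ (H i) x : V →L[ℝ] ℝ) : V →ₗ[ℝ] ℝ)) := by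
    intro x hx
    exact hx.map' (ContinuousLinearMap.coeLM ℝ)
      (LinearMap.ker_eq_bot.2 ContinuousLinearMap.coe_injective)
  obtain ⟨li0, iso0⟩ := lag 0 h0U H0
  have rel := fun i => aux_relations (H i) (smooth i) (H0 i) P Q R S f hf (hh i)
  have PK : ∀ i, fderiv ℝ (H i) 0 P = 0 := fun i => (rel i).1
  have QK : ∀ i, fderiv ℝ (H i) 0 Q = 0 := fun i => (rel i).2.1
  -- functions with prescribed differential
  have exf : ∀ w : V, (∀ i, fderiv ℝ (H i) 0 w = 0) → ∃ a : Fin n → ℝ,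
      ∀ v, ∑ i, a i * fderiv ℝ (H i) 0 v = Ω w v := by
    intro w hw
    have : Ω w ∈ Submodule.span ℝ
        (Set.range (fun i => ((fderiv ℝ (H i) 0 : V →L[ℝ] ℝ) : V →ₗ[ℝ] ℝ))) := by
      refine mem_span_of_iInf_ker_le_ker (fun v hv => ?_)
      refine iso0 w v hw ?_
      simpa [Submodule.mem_iInf] using hv
    obtain ⟨a, ha⟩ := (Submodule.mem_span_range_iff_exists_fun ℝ).1 this
    refine ⟨a, fun v => ?_⟩
    rw [← ha]; simp
  obtain ⟨a, ha⟩ := exf P PK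
  obtain ⟨b, hb⟩ := exf Q QK
  have mk : ∀ a : Fin n → ℝ, ContDiff ℝ (⊤ : ℕ∞) (fun x => ∑ i, a i * H i x) := fun a =>
    ContDiff.sum (fun i _ => contDiff_const.mul (smooth i))
  have mkd : ∀ (a : Fin n → ℝ) x,
      fderiv ℝ (fun x => ∑ i, a i * H i x) x = ∑ i, a i • fderiv ℝ (H i) x := by
    intro a x
    exact (HasFDerivAt.fun_sum (fun i _ => ((hdH i x).hasFDerivAt.const_mul (a i)))).fderiv
  have mkO : ∀ a : Fin n → ℝ, (fun t => ∑ i, a i * H i (f t)) =O[𝓝 0] (fun t => t ^ 6) := fun a =>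
    IsBigO.fun_sum (fun i _ => (hh i).const_mul_left _)
  set A : V → ℝ := fun x => ∑ i, a i * H i x with hAdef
  set B : V → ℝ := fun x => ∑ i, b i * H i x with hBdef
  have cA : ContDiff ℝ (⊤ : ℕ∞) A := mk a
  have cB : ContDiff ℝ (⊤ : ℕ∞) B := mk b
  have rA := aux_relations A cA (by simp [hAdef, H0]) P Q R S f hf (mkO a)
  have rB := aux_relations B cB (by simp [hBdef, H0]) P Q R S f hf (mkO b)
  have dA0 : ∀ v, fderiv ℝ A 0 v = Ω P v := by
    intro v; rw [hAdef, mkd, ← ha v]; simp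
  have dB0 : ∀ v, fderiv ℝ B 0 v = Ω Q v := by
    intro v; rw [hBdef, mkd, ← hb v]; simp
  -- the inverse of Ω as a continuous map
  let J : (V →L[ℝ] ℝ) →L[ℝ] V := LinearMap.toContinuousLinearMap
    (Ωe.symm.toLinearMap ∘ₗ (ContinuousLinearMap.coeLM ℝ : (V →L[ℝ] ℝ) →ₗ[ℝ] (V →ₗ[ℝ] ℝ)))
  have hJ : ∀ α v, Ω (J α) v = α v := by
    intro α v
    rw [← hΩe]
    simp [J]
  have hJ' : ∀ α, J α = Ωe.symm (α : V →ₗ[ℝ] ℝ) := fun α => rfl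
  have pois : ∀ x ∈ U, (∀ i, H i x = 0) → fderiv ℝ A x (J (fderiv ℝ B x)) = 0 := by
    intro x hx hHx
    obtain ⟨li, iso⟩ := lag x hx hHx
    have hl := aux_linalg n hdim Ωe _ (indep x li) (fun u v hu hv => iso u v hu hv)
    rw [hAdef, hBdef, mkd, mkd, map_sum]
    simp only [_root_.sum_apply, _root_.smul_apply, map_sum, hJ', smul_eq_mul]
    refine Finset.sum_eq_zero (fun i _ => ?_)
    have : ∀ j, fderiv ℝ (H j) x (Ωe.symm (fderiv ℝ (H i) x : V →ₗ[ℝ] ℝ)) = 0 := fun j => hl i j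
    simp [this]
  -- implicit function theorem
  let F : V → (Fin n → ℝ) := fun x i => H i x
  let F' : V →L[ℝ] (Fin n → ℝ) := ContinuousLinearMap.pi (fun i => fderiv ℝ (H i) 0)
  have hF : HasStrictFDerivAt F F' 0 := by
    refine hasStrictFDerivAt_pi.2 (fun i => ?_)
    exact (smooth i).contDiffAt.hasStrictFDerivAt (by simp)
  have hF' : F'.range = ⊤ := aux_surj_s7 n _ (indep 0 li0)
  have hF0 : F 0 = 0 := funext H0
  have hPker : P ∈ F'.ker := by
    rw [LinearMap.mem_ker]; exact funext PK
  let p : F'.ker := ⟨P, hPker⟩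
  let γ : ℝ → V := fun s => hF.implicitFunction F F' hF' (F 0) (s • p)
  have hγ0 : γ 0 = 0 := by
    simp only [γ, zero_smul]; exact hF.implicitFunction_apply_image hF'
  have hγd : HasDerivAt γ P 0 := by
    have h1 : HasFDerivAt (hF.implicitFunction F F' hF' (F 0)) F'.ker.subtypeL ((0 : ℝ) • p) := by
      rw [zero_smul]; exact (hF.to_implicitFunction hF').hasFDerivAt
    have h2 : HasDerivAt (fun s : ℝ => s • p) ((1 : ℝ) • p) 0 := (hasDerivAt_id (0:ℝ)).smul_const p
    have := h1.comp_hasDerivAt (0 : ℝ) h2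
    rw [one_smul] at this
    exact this
  have hγF : ∀ᶠ s in 𝓝 (0 : ℝ), F (γ s) = 0 := by
    have h1 := hF.map_implicitFunction_eq hF'
    have h2 : Tendsto (fun s : ℝ => ((F 0, s • p) : (Fin n → ℝ) × F'.ker)) (𝓝 0) (𝓝 (F 0, 0)) := by
      have : Continuous (fun s : ℝ => ((F 0, s • p) : (Fin n → ℝ) × F'.ker)) := by fun_prop
      simpa using this.tendsto 0
    filter_upwards [h2.eventually h1] with s hs
    rw [← hF0]; exact hs
  have hγU : ∀ᶠ s in 𝓝 (0 : ℝ), γ s ∈ U := by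
    refine hγd.continuousAt.eventually ?_
    rw [hγ0]; exact hU.mem_nhds h0U
  have zero : (fun s => fderiv ℝ A (γ s) (J (fderiv ℝ B (γ s)))) =ᶠ[𝓝 0] fun _ => (0 : ℝ) := by
    filter_upwards [hγF, hγU] with s h1 h2
    exact pois _ h2 (fun i => congrFun h1 i)
  have dd : ∀ G : V → ℝ, ContDiff ℝ (⊤ : ℕ∞) G →
      HasDerivAt (fun s => fderiv ℝ G (γ s)) (fderiv ℝ (fderiv ℝ G) 0 P) 0 := by
    intro G hG
    have hG1 : ContDiff ℝ (⊤ : ℕ∞) (fderiv ℝ G) := hG.fderiv_right (by simp)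
    have h1 : HasFDerivAt (fderiv ℝ G) (fderiv ℝ (fderiv ℝ G) 0) (γ 0) := by
      rw [hγ0]; exact (hG1.differentiable (by simp) 0).hasFDerivAt
    exact h1.comp_hasDerivAt (0 : ℝ) hγd
  have hd := (dd A cA).clm_apply (J.hasFDerivAt.comp_hasDerivAt (0 : ℝ) (dd B cB))
  have hz := hd.unique ((hasDerivAt_const (0 : ℝ) (0 : ℝ)).congr_of_eventuallyEq zero)
  simp only [Function.comp, hγ0] at hz
  have hJB : J (fderiv ℝ B 0) = Q := by
    apply hinj; ext v; rw [hJ, dB0]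
  rw [hJB, dA0, alt, hJ] at hz
  have e1 := rA.2.2.2
  have e2 := rB.2.2.1
  rw [dA0, hPS] at e1
  rw [dB0] at e2
  apply hQR
  linarith

theorem aux_symp_single_odd (n : ℕ) (u : Fin (2 * n) → ℝ) (i : Fin n) (h : 2 * i.val + 1 < 2 * n) :
    stdSymp n u (Pi.single ⟨2 * i.val + 1, h⟩ 1) = u ⟨2 * i.val, by omega⟩ := by
  unfold stdSymp
  rw [Finset.sum_eq_single i]
  · simp [Fin.ext_iff]
  · intro j _ hj
    have hj' : j.val ≠ i.val := fun h => hj (Fin.ext h)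
    have h1 : ¬ (2 * j.val + 1 = 2 * i.val + 1) := by omega
    have h2 : ¬ (2 * j.val = 2 * i.val + 1) := by omega
    simp only [Pi.single_apply, Fin.mk.injEq, h1, h2, if_false, mul_zero, sub_zero]
  · simp

theorem aux_symp_alt (n : ℕ) (u v : Fin (2 * n) → ℝ) : stdSymp n u v = - stdSymp n v u := by
  unfold stdSymp
  rw [← Finset.sum_neg_distrib]
  exact Finset.sum_congr rfl (fun i _ => by ring)

theorem aux_symp_single_even (n : ℕ) (u : Fin (2 * n) → ℝ) (i : Fin n) (h : 2 * i.val < 2 * n) :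
    stdSymp n u (Pi.single ⟨2 * i.val, h⟩ 1) = - u ⟨2 * i.val + 1, by omega⟩ := by
  unfold stdSymp
  rw [Finset.sum_eq_single i]
  · simp [Fin.ext_iff]
  · intro j _ hj
    have hj' : j.val ≠ i.val := fun h => hj (Fin.ext h)
    have h1 : ¬ (2 * j.val + 1 = 2 * i.val) := by omega
    have h2 : ¬ (2 * j.val = 2 * i.val) := by omega
    simp only [Pi.single_apply, Fin.mk.injEq, h1, h2, if_false, mul_zero, sub_zero]
  · simp

def auxSymp (n : ℕ) : (Fin (2 * n) → ℝ) →ₗ[ℝ] Module.Dual ℝ (Fin (2 * n) → ℝ) :=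
  LinearMap.mk₂ ℝ (stdSymp n)
    (by intro a b c; unfold stdSymp; rw [← Finset.sum_add_distrib]
        exact Finset.sum_congr rfl (fun i _ => by simp only [Pi.add_apply]; ring))
    (by intro r a b; unfold stdSymp; rw [smul_eq_mul, Finset.mul_sum]
        exact Finset.sum_congr rfl (fun i _ => by simp only [Pi.smul_apply, smul_eq_mul]; ring))
    (by intro a b c; unfold stdSymp; rw [← Finset.sum_add_distrib]
        exact Finset.sum_congr rfl (fun i _ => by simp only [Pi.add_apply]; ring))
    (by intro r a b; unfold stdSymp; rw [smul_eq_mul, Finset.mul_sum]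
        exact Finset.sum_congr rfl (fun i _ => by simp only [Pi.smul_apply, smul_eq_mul]; ring))

theorem auxSymp_apply (n : ℕ) (u v) : auxSymp n u v = stdSymp n u v := rfl

theorem aux_le_vanishOrder (h : ℝ → ℝ) (N : ℕ) :
    (N : ℕ∞) ≤ vanishOrder h ↔ ∀ m, 1 ≤ m → m < N → iteratedDeriv m h 0 = 0 := by
  unfold vanishOrder
  rw [le_sInf_iff]
  constructor
  · intro H m h1 h2
    by_contra h3
    have := H m ⟨m, rfl, h1, h3⟩
    have : N ≤ m := by exact_mod_cast this
    omega
  · rintro H _ ⟨m, rfl, h1, h2⟩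
    by_contra h3
    rw [not_le] at h3
    exact h2 (H m h1 (by exact_mod_cast h3))

/-- Upper bound. -/
theorem aux_upper (n : ℕ) (P Q R S : Fin (2 * n) → ℝ) (f : ℝ → Fin (2 * n) → ℝ)
    (hf : ∀ t, f t = t ^ 2 • (-P) + t ^ 3 • Q + t ^ 4 • R + t ^ 5 • S)
    (hPS : stdSymp n P S = 0) (hQR : stdSymp n Q R ≠ 0) : Lt1 f ≤ 5 := by
  refine iSup_le (fun L => ?_)
  by_contra hlt
  rw [not_le] at hlt
  have h6 : ((6 : ℕ) : ℕ∞) ≤ tOrd f L := by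
    have := Order.add_one_le_of_lt hlt
    exact le_trans (by norm_num) this
  obtain ⟨U, hU, h0U, lag⟩ := L.lagrangian
  refine aux_core n (by simp) (auxSymp n) (aux_symp_alt n) ?_ L.H L.smooth L.zero_at_zero U hU h0U
    lag P Q R S f hf ?_ hPS hQR
  · intro u hu
    ext j
    have hj := j.isLt
    rcases Nat.even_or_odd' j.val with ⟨k, hk | hk⟩
    · have := hu (Pi.single ⟨2 * k + 1, by omega⟩ 1)
      rw [auxSymp_apply, aux_symp_single_odd n u ⟨k, by omega⟩] at this
      rw [show j = ⟨2 * k, by omega⟩ from Fin.ext hk]; exact this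
    · have := hu (Pi.single ⟨2 * k, by omega⟩ 1)
      rw [auxSymp_apply, aux_symp_single_even n u ⟨k, by omega⟩, neg_eq_zero] at this
      rw [show j = ⟨2 * k + 1, by omega⟩ from Fin.ext hk]; exact this
  · intro i
    have hi := (aux_le_vanishOrder _ 6).1 (h6.trans (iInf_le _ i))
    have hfc : ContDiff ℝ (⊤ : ℕ∞) f := by
      rw [show f = _ from funext hf]; fun_prop
    have := aux_bigO_of_iteratedDeriv 6 (fun t => L.H i (f t)) ((L.smooth i).comp hfc) (by
      intro k hk
      rcases Nat.eq_zero_or_pos k with rfl | hk0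
      · simp [hf, L.zero_at_zero]
      · exact hi k hk0 hk)
    refine this.trans (Asymptotics.IsBigO.of_bound 1 ?_)
    filter_upwards with t
    simp

def auxPhi (n : ℕ) (hn : 3 ≤ n) (c : ℝ) (i : Fin n) (x : Fin (2 * n) → ℝ) : ℝ :=
  if i.val = 0 then (1 / 2) * x ⟨4, by omega⟩ ^ 2 + (c / 2) * x ⟨2, by omega⟩ ^ 2
  else if i.val = 1 then c * (x ⟨0, by omega⟩ * x ⟨2, by omega⟩)
  else if i.val = 2 then x ⟨0, by omega⟩ * x ⟨4, by omega⟩ else 0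

def auxH (n : ℕ) (hn : 3 ≤ n) (c : ℝ) (i : Fin n) (x : Fin (2 * n) → ℝ) : ℝ :=
  x ⟨2 * i.val + 1, by omega⟩ - auxPhi n hn c i x

def auxDPhi (n : ℕ) (hn : 3 ≤ n) (c : ℝ) (i : Fin n) (x u : Fin (2 * n) → ℝ) : ℝ :=
  if i.val = 0 then x ⟨4, by omega⟩ * u ⟨4, by omega⟩ + c * x ⟨2, by omega⟩ * u ⟨2, by omega⟩
  else if i.val = 1 then
    c * (u ⟨0, by omega⟩ * x ⟨2, by omega⟩ + x ⟨0, by omega⟩ * u ⟨2, by omega⟩)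
  else if i.val = 2 then
    u ⟨0, by omega⟩ * x ⟨4, by omega⟩ + x ⟨0, by omega⟩ * u ⟨4, by omega⟩ else 0

theorem auxH_smooth (n : ℕ) (hn : 3 ≤ n) (c : ℝ) (i : Fin n) :
    ContDiff ℝ (⊤ : ℕ∞) (auxH n hn c i) := by
  unfold auxH auxPhi
  split_ifs <;> fun_prop

theorem auxH_fderiv (n : ℕ) (hn : 3 ≤ n) (c : ℝ) (i : Fin n) (x u : Fin (2 * n) → ℝ) :
    fderiv ℝ (auxH n hn c i) x u = u ⟨2 * i.val + 1, by omega⟩ - auxDPhi n hn c i x u := by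
  have hp : ∀ j : Fin (2 * n), HasFDerivAt (fun x : Fin (2 * n) → ℝ => x j)
    (ContinuousLinearMap.proj (R := ℝ) (φ := fun _ : Fin (2 * n) => ℝ) j) x :=
    fun j => hasFDerivAt_apply j x
  unfold auxH auxPhi auxDPhi
  split_ifs with h0 h1 h2
  · rw [((hp _).fun_sub ((((hp _).pow 2).const_mul (1 / 2)).fun_add
      (((hp _).pow 2).const_mul (c / 2)))).fderiv]
    simp; ring
  · rw [((hp _).fun_sub (((hp _).fun_mul (hp _)).const_mul c)).fderiv]
    simp; ring
  · rw [((hp _).fun_sub ((hp _).fun_mul (hp _))).fderiv]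
    simp; ring
  · simp only [sub_zero]
    rw [(hp _).fderiv]
    simp

theorem aux_sum3 (n : ℕ) (hn : 3 ≤ n) (F : Fin n → ℝ) (hF : ∀ i : Fin n, 3 ≤ i.val → F i = 0) :
    ∑ i, F i = F ⟨0, by omega⟩ + F ⟨1, by omega⟩ + F ⟨2, by omega⟩ := by
  obtain ⟨m, rfl⟩ := Nat.exists_eq_add_of_le' hn
  rw [Fin.sum_univ_succ, Fin.sum_univ_succ, Fin.sum_univ_succ, Finset.sum_eq_zero]
  · rw [add_zero, ← add_assoc]; rfl
  · intro i _
    refine hF _ ?_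
    simp only [Fin.val_succ]; omega

theorem auxDPhi_isotropic (n : ℕ) (hn : 3 ≤ n) (c : ℝ) (x u v : Fin (2 * n) → ℝ)
    (hu : ∀ i : Fin n, u ⟨2 * i.val + 1, by omega⟩ = auxDPhi n hn c i x u)
    (hv : ∀ i : Fin n, v ⟨2 * i.val + 1, by omega⟩ = auxDPhi n hn c i x v) :
    stdSymp n u v = 0 := by
  unfold stdSymp
  simp only [hu, hv]
  rw [aux_sum3 n hn]
  · simp [auxDPhi]
    ring
  · intro i hi
    have h0 : ¬ (i.val = 0) := by omega
    have h1 : ¬ (i.val = 1) := by omega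
    have h2 : ¬ (i.val = 2) := by omega
    simp [auxDPhi, h0, h1, h2]

def auxL (n : ℕ) (hn : 3 ≤ n) (c : ℝ) : LagrangianGerm n where
  H := auxH n hn c
  smooth := auxH_smooth n hn c
  zero_at_zero := by
    intro i
    unfold auxH auxPhi
    simp
  lagrangian := by
    refine ⟨Set.univ, isOpen_univ, Set.mem_univ _, fun x _ _ => ⟨?_, ?_⟩⟩
    · rw [Fintype.linearIndependent_iff]
      intro g hg i
      have := congrArg (fun α : (Fin (2 * n) → ℝ) →L[ℝ] ℝ =>
        α (Pi.single ⟨2 * i.val + 1, by omega⟩ 1)) hg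
      simp only [_root_.sum_apply, _root_.smul_apply, auxH_fderiv, smul_eq_mul] at this
      rw [Finset.sum_eq_single i] at this
      · have h3 : ¬ (4 = 2 * i.val + 1) := by omega
        have h4 : ¬ (2 = 2 * i.val + 1) := by omega
        simpa [auxDPhi, Pi.single_apply, h3, h4] using this
      · intro j _ hj
        have hj' : j.val ≠ i.val := fun h => hj (Fin.ext h)
        have h3 : ¬ (4 = 2 * i.val + 1) := by omega
        have h4 : ¬ (2 = 2 * i.val + 1) := by omega
        simp [auxDPhi, Pi.single_apply, hj', h3, h4]
      · simp
    · intro u v hu hv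
      refine auxDPhi_isotropic n hn c x u v (fun i => ?_) (fun i => ?_)
      · have := hu i
        rw [auxH_fderiv] at this; linarith
      · have := hv i
        rw [auxH_fderiv] at this; linarith

theorem aux_five_le (h : ℝ → ℝ) (k : ℝ) (hk : ∀ t, h t = k * t ^ 5) : 5 ≤ vanishOrder h := by
  refine (aux_le_vanishOrder h 5).2 (fun m _ h2 => ?_)
  rw [show h = fun t => k * t ^ 5 from funext hk, iteratedDeriv_const_mul_field,
    iteratedDeriv_pow, zero_pow (by omega)]
  simp

theorem aux_top_vanish : vanishOrder (fun _ : ℝ => (0 : ℝ)) = ⊤ := by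
  unfold vanishOrder
  rw [sInf_eq_top]
  rintro _ ⟨m, rfl, h1, h2⟩
  exact absurd (by simp [iteratedDeriv_const]) h2

/-- Lagrangian tangency orders for the class `(T₇)³`. -/
theorem T7_3_lagrangian_tangency_orders
    (n : ℕ) (hn : 3 ≤ n) (c₁ c₂ : ℝ)
    (B₁ B₂ : ℝ → Fin (2 * n) → ℝ)
    (hB₁ : B₁ = fun (t : ℝ) (j : Fin (2 * n)) => if (j : ℕ) = 0 then t ^ 3 else if (j : ℕ) = 1 then (1 / 2) * t ^ 4 else if (j : ℕ) = 3 then c₂ * t ^ 5 else if (j : ℕ) = 4 then -t ^ 2 else (0 : ℝ))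
    (hB₂ : B₂ = fun (t : ℝ) (j : Fin (2 * n)) => if (j : ℕ) = 0 then t ^ 3 else if (j : ℕ) = 1 then (c₁ / 2) * t ^ 4 else if (j : ℕ) = 2 then -t ^ 2 else (0 : ℝ)) :
    Lt2 B₁ B₂ = 5 ∧ Lt1 B₁ = 5 ∧
    (c₁ ≠ 0 → Lt1 B₂ = 5) ∧ (c₁ = 0 → Lt1 B₂ = ⊤) := by
  have odd : ∀ (u : Fin (2 * n) → ℝ) (r : ℝ) (k : ℕ) (hk : k < n),
      stdSymp n u (r • Pi.single ⟨2 * k + 1, by omega⟩ 1) = r * u ⟨2 * k, by omega⟩ := by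
    intro u r k hk
    rw [← auxSymp_apply, map_smul, auxSymp_apply, aux_symp_single_odd n u ⟨k, hk⟩, smul_eq_mul]
  have up1 : Lt1 B₁ ≤ 5 := by
    refine aux_upper n (Pi.single ⟨4, by omega⟩ 1) (Pi.single ⟨0, by omega⟩ 1)
      ((1 / 2 : ℝ) • Pi.single ⟨1, by omega⟩ 1) (c₂ • Pi.single ⟨3, by omega⟩ 1) B₁ ?_ ?_ ?_
    · intro t
      ext j
      rw [hB₁]
      simp only [Pi.add_apply, Pi.smul_apply, Pi.neg_apply, Pi.single_apply, Fin.ext_iff,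
        smul_eq_mul]
      split_ifs <;> first | omega | ring
    · rw [odd _ _ 1 (by omega)]; simp [Pi.single_apply]
    · rw [odd _ _ 0 (by omega)]; simp [Pi.single_apply]
  have up2 : c₁ ≠ 0 → Lt1 B₂ ≤ 5 := by
    intro hc
    refine aux_upper n (Pi.single ⟨2, by omega⟩ 1) (Pi.single ⟨0, by omega⟩ 1)
      ((c₁ / 2 : ℝ) • Pi.single ⟨1, by omega⟩ 1) 0 B₂ ?_ ?_ ?_
    · intro t
      ext j
      rw [hB₂]
      simp only [Pi.add_apply, Pi.smul_apply, Pi.neg_apply, Pi.single_apply, Fin.ext_iff,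
        smul_eq_mul, Pi.zero_apply]
      split_ifs <;> first | omega | ring
    · rw [← auxSymp_apply, map_zero]
    · rw [odd _ _ 0 (by omega)]; simp [hc]
  have val1 : ∀ i t, auxH n hn c₁ i (B₁ t) =
      (if i.val = 1 then c₂ else if i.val = 2 then 1 else 0) * t ^ 5 := by
    intro i t
    rw [hB₁]
    simp only [auxH, auxPhi]
    by_cases h0 : i.val = 0
    · simp [h0]; ring
    by_cases h1 : i.val = 1
    · simp [h1]
    by_cases h2 : i.val = 2
    · simp [h2]; ring
    have e1 : ¬ (2 * i.val + 1 = 3) := by omega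
    have e2 : ¬ (2 * i.val + 1 = 4) := by omega
    simp [h0, h1, h2, e1, e2]
  have val2 : ∀ i t, auxH n hn c₁ i (B₂ t) = (if i.val = 1 then c₁ else 0) * t ^ 5 := by
    intro i t
    rw [hB₂]
    simp only [auxH, auxPhi]
    by_cases h0 : i.val = 0
    · simp [h0]; ring
    by_cases h1 : i.val = 1
    · simp [h1]
      ring_nf
      simp
    by_cases h2 : i.val = 2
    · simp [h2]
    have e1 : ¬ (2 * i.val + 1 = 2) := by omega
    simp [h0, h1, h2, e1]
  have lo1 : 5 ≤ tOrd B₁ (auxL n hn c₁) := le_iInf (fun i => aux_five_le _ _ (val1 i))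
  have lo2 : 5 ≤ tOrd B₂ (auxL n hn c₁) := le_iInf (fun i => aux_five_le _ _ (val2 i))
  have l1 : 5 ≤ Lt1 B₁ := lo1.trans (le_iSup (fun L => tOrd B₁ L) (auxL n hn c₁))
  have l2 : 5 ≤ Lt1 B₂ := lo2.trans (le_iSup (fun L => tOrd B₂ L) (auxL n hn c₁))
  have l12 : 5 ≤ Lt2 B₁ B₂ :=
    (le_min lo1 lo2).trans (le_iSup (fun L => min (tOrd B₁ L) (tOrd B₂ L)) (auxL n hn c₁))
  have u12 : Lt2 B₁ B₂ ≤ Lt1 B₁ := iSup_mono (fun L => min_le_left _ _)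
  refine ⟨le_antisymm (u12.trans up1) l12, le_antisymm up1 l1,
    fun hc => le_antisymm (up2 hc) l2, fun hc => ?_⟩
  have ht : tOrd B₂ (auxL n hn c₁) = ⊤ := by
    unfold tOrd
    rw [iInf_eq_top]
    intro i
    have : (fun t => (auxL n hn c₁).H i (B₂ t)) = fun _ => (0 : ℝ) := by
      funext t
      refine (val2 i t).trans ?_
      simp [hc]
    rw [this, aux_top_vanish]
  exact top_le_iff.1 (ht ▸ le_iSup (fun L => tOrd B₂ L) (auxL n hn c₁))

end
end
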